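/- Under the zero-loss hypothesis, the (unthickened) foregrounds F(P) and F(G) of the prediction and the ground truth are homotopy equivalent topological spaces (with the subspace topology from ℝ²). -/

import Mathlib

open Set Metric

noncomputable section

/-- The plane modeled as `Fin 2 → ℝ` with the Pi (sup) norm. -/
abbrev Plane : Type := Fin 2 → ℝ

/-- The Euclidean plane (for Euclidean-norm disks and annuli). -/
abbrev EPlane : Type := EuclideanSpace ℝ (Fin 2)

/-- The closed unit pixel `[i-1,i] × [j-1,j]` for a pixel index `(i,j)`. -/
def pixel (p : ℕ × ℕ) : Set Plane :=
  {x | x 0 ∈ Set.Icc ((p.1 : ℝ) - 1) (p.1 : ℝ) ∧ x 1 ∈ Set.Icc ((p.2 : ℝ) - 1) (p.2 : ℝ)}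

/-- A binary image `S` lies on the `h × w` grid `{1,…,h} × {1,…,w}`. -/
def OnGrid (S : Set (ℕ × ℕ)) (h w : ℕ) : Prop :=
  S ⊆ Set.Icc 1 h ×ˢ Set.Icc 1 w

/-- The foreground `F(S)` of a binary image. -/
def fg (S : Set (ℕ × ℕ)) : Set Plane := ⋃ p ∈ S, pixel p

/-- Closed `ε`-thickening `D_ε(X)` with respect to the sup norm. -/
def thick (ε : ℝ) (X : Set Plane) : Set Plane := {y | ∃ x ∈ X, ‖x - y‖ ≤ ε}

/-- `C` is a connected component of `A` (as a subset of the plane). -/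
def IsCompOf (C A : Set Plane) : Prop := ∃ x ∈ A, C = connectedComponentIn A x

/-- Two subsets share a boundary edge if their closures intersect in an infinite set. -/
def SharesEdge (C D : Set Plane) : Prop := (closure C ∩ closure D).Infinite

/-- `X` strongly deformation retracts onto `A`. -/
def SDR (X A : Set Plane) : Prop :=
  ∃ H : C(↥X × unitInterval, ↥X),
    (∀ x, H (x, 0) = x) ∧ (∀ x, ((H (x, 1) : Plane)) ∈ A) ∧
    (∀ a : ↥X, (a : Plane) ∈ A → ∀ t, H (a, t) = a)

def TPset (P G : Set (ℕ × ℕ)) (ε : ℝ) : Set Plane := thick ε (fg P) ∩ thick (2 * ε) (fg G)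
def TNset (P G : Set (ℕ × ℕ)) (ε : ℝ) : Set Plane := (thick ε (fg P))ᶜ ∩ (thick (2 * ε) (fg G))ᶜ
def FPset (P G : Set (ℕ × ℕ)) (ε : ℝ) : Set Plane := thick ε (fg P) ∩ (thick (2 * ε) (fg G))ᶜ
def FNset (P G : Set (ℕ × ℕ)) (ε : ℝ) : Set Plane := (thick ε (fg P))ᶜ ∩ thick (2 * ε) (fg G)

/-- A component `C` (of `FP` or `FN`) is regular: exactly one component of `TP` and exactly
one component of `TN` share a boundary edge with it. -/
def RegularComp (P G : Set (ℕ × ℕ)) (ε : ℝ) (C : Set Plane) : Prop :=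
  (∃! T : Set Plane, IsCompOf T (TPset P G ε) ∧ SharesEdge T C) ∧
  (∃! T : Set Plane, IsCompOf T (TNset P G ε) ∧ SharesEdge T C)

/-- The zero-loss hypothesis: every component of `FP` and every component of `FN` is regular. -/
def ZeroLoss (P G : Set (ℕ × ℕ)) (ε : ℝ) : Prop :=
  (∀ C : Set Plane, IsCompOf C (FPset P G ε) → RegularComp P G ε C) ∧
  (∀ C : Set Plane, IsCompOf C (FNset P G ε) → RegularComp P G ε C)

namespace ZL

/-- 4-adjacency on `ℤ × ℤ`. -/
def A4 (a b : ℤ × ℤ) : Prop :=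
  (a.1 = b.1 ∧ (b.2 = a.2 + 1 ∨ a.2 = b.2 + 1)) ∨ (a.2 = b.2 ∧ (b.1 = a.1 + 1 ∨ a.1 = b.1 + 1))

/-- 8-adjacency (allowing equality) on `ℤ × ℤ`. -/
def A8 (a b : ℤ × ℤ) : Prop :=
  a.1 ≤ b.1 + 1 ∧ b.1 ≤ a.1 + 1 ∧ a.2 ≤ b.2 + 1 ∧ b.2 ≤ a.2 + 1

/-- Connectivity by `adj`-paths inside `S`. -/
def Cn (adj : ℤ × ℤ → ℤ × ℤ → Prop) (S : Set (ℤ × ℤ)) (a b : ℤ × ℤ) : Prop :=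
  Relation.ReflTransGen (fun x y => x ∈ S ∧ y ∈ S ∧ adj x y) a b

theorem A4.symm {a b : ℤ × ℤ} (h : A4 a b) : A4 b a := by
  unfold A4 at *; omega

theorem A8.symm {a b : ℤ × ℤ} (h : A8 a b) : A8 b a := by
  unfold A8 at *; omega

theorem A4.a8 {a b : ℤ × ℤ} (h : A4 a b) : A8 a b := by
  unfold A4 A8 at *; omega

theorem Cn.refl {adj} {S : Set (ℤ × ℤ)} (a : ℤ × ℤ) : Cn adj S a a := Relation.ReflTransGen.refl

theorem Cn.trans {adj} {S : Set (ℤ × ℤ)} {a b c : ℤ × ℤ} (h : Cn adj S a b) (h' : Cn adj S b c) :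
    Cn adj S a c := Relation.ReflTransGen.trans h h'

theorem Cn.single {adj : ℤ × ℤ → ℤ × ℤ → Prop} {S : Set (ℤ × ℤ)} {a b : ℤ × ℤ}
    (ha : a ∈ S) (hb : b ∈ S) (h : adj a b) : Cn adj S a b :=
  Relation.ReflTransGen.single ⟨ha, hb, h⟩

theorem Cn.mono {adj adj' : ℤ × ℤ → ℤ × ℤ → Prop} {S S' : Set (ℤ × ℤ)} {a b : ℤ × ℤ}
    (hadj : ∀ x y, adj x y → adj' x y) (hS : S ⊆ S') (h : Cn adj S a b) : Cn adj' S' a b :=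
  Relation.ReflTransGen.mono (fun _ _ hxy => ⟨hS hxy.1, hS hxy.2.1, hadj _ _ hxy.2.2⟩) _ _ h

theorem Cn.symm {adj : ℤ × ℤ → ℤ × ℤ → Prop} (hadj : ∀ x y, adj x y → adj y x)
    {S : Set (ℤ × ℤ)} {a b : ℤ × ℤ} (h : Cn adj S a b) : Cn adj S b a := by
  induction h with
  | refl => exact Cn.refl _
  | tail _ hbc ih =>
    exact (Cn.single hbc.2.1 hbc.1 (hadj _ _ hbc.2.2)).trans ih

theorem Cn.symm8 {S : Set (ℤ × ℤ)} {a b : ℤ × ℤ} (h : Cn A8 S a b) : Cn A8 S b a :=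
  Cn.symm (fun _ _ h => h.symm) h

theorem Cn.symm4 {S : Set (ℤ × ℤ)} {a b : ℤ × ℤ} (h : Cn A4 S a b) : Cn A4 S b a :=
  Cn.symm (fun _ _ h => h.symm) h

theorem Cn.mem {adj} {S : Set (ℤ × ℤ)} {a b : ℤ × ℤ} (h : Cn adj S a b) (ha : a ∈ S) :
    b ∈ S := by
  induction h with
  | refl => exact ha
  | tail _ hbc _ => exact hbc.2.1

/-- horizontal edge indicator -/
def eh (a b : ℤ × ℤ) (x y : ℤ) : ZMod 2 :=
  if (a.1 = x ∧ a.2 = y ∧ b.1 = x + 1 ∧ b.2 = y) ∨ (b.1 = x ∧ b.2 = y ∧ a.1 = x + 1 ∧ a.2 = y)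
  then 1 else 0

/-- vertical edge indicator -/
def ev (a b : ℤ × ℤ) (x y : ℤ) : ZMod 2 :=
  if (a.1 = x ∧ a.2 = y ∧ b.1 = x ∧ b.2 = y + 1) ∨ (b.1 = x ∧ b.2 = y ∧ a.1 = x ∧ a.2 = y + 1)
  then 1 else 0

/-- point indicator -/
def ep (a : ℤ × ℤ) (x y : ℤ) : ZMod 2 := if a.1 = x ∧ a.2 = y then 1 else 0

theorem edge_boundary {a b : ℤ × ℤ} (h : A4 a b) (x y : ℤ) :
    eh a b x y + eh a b (x - 1) y + ev a b x y + ev a b x (y - 1) = ep a x y + ep b x y := by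
  obtain ⟨a1, a2⟩ := a
  obtain ⟨b1, b2⟩ := b
  simp only [A4] at h
  simp only [eh, ev, ep]
  by_cases ha : a1 = x ∧ a2 = y
  · by_cases hb : b1 = x ∧ b2 = y
    · omega
    · rw [if_pos ha, if_neg hb]
      obtain ⟨rfl, rfl⟩ := ha
      rcases h with ⟨h1, h2 | h2⟩ | ⟨h1, h2 | h2⟩
      · rw [if_neg (by omega), if_neg (by omega), if_pos (by omega), if_neg (by omega)]; rfl
      · rw [if_neg (by omega), if_neg (by omega), if_neg (by omega), if_pos (by omega)]; rfl
      · rw [if_pos (by omega), if_neg (by omega), if_neg (by omega), if_neg (by omega)]; rfl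
      · rw [if_neg (by omega), if_pos (by omega), if_neg (by omega), if_neg (by omega)]; rfl
  · by_cases hb : b1 = x ∧ b2 = y
    · rw [if_neg ha, if_pos hb]
      obtain ⟨rfl, rfl⟩ := hb
      rcases h with ⟨h1, h2 | h2⟩ | ⟨h1, h2 | h2⟩
      · rw [if_neg (by omega), if_neg (by omega), if_neg (by omega), if_pos (by omega)]; rfl
      · rw [if_neg (by omega), if_neg (by omega), if_pos (by omega), if_neg (by omega)]; rfl
      · rw [if_neg (by omega), if_pos (by omega), if_neg (by omega), if_neg (by omega)]; rfl
      · rw [if_pos (by omega), if_neg (by omega), if_neg (by omega), if_neg (by omega)]; rfl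
    · rw [if_neg (by omega), if_neg (by omega), if_neg (by omega), if_neg (by omega),
        if_neg ha, if_neg hb]; rfl

theorem exists_chain {S : Set (ℤ × ℤ)} {a b : ℤ × ℤ} (h : Cn A4 S a b) :
    ∃ (hE vE : ℤ → ℤ → ZMod 2) (M : ℤ),
      (∀ x y, ((x, y) ∉ S ∨ (x + 1, y) ∉ S) → hE x y = 0) ∧
      (∀ x y, ((x, y) ∉ S ∨ (x, y + 1) ∉ S) → vE x y = 0) ∧
      (∀ x y, M < x → hE x y = 0) ∧ (∀ x y, M < x → vE x y = 0) ∧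
      ∀ x y, hE x y + hE (x - 1) y + vE x y + vE x (y - 1) = ep a x y + ep b x y := by
  induction h with
  | refl =>
    refine ⟨0, 0, 0, by simp, by simp, by simp, by simp, fun x y => ?_⟩
    simp only [Pi.zero_apply]
    generalize ep a x y = t
    revert t; decide
  | @tail b c _ hbc ih =>
    obtain ⟨hE, vE, M, h1, h2, h3, h4, h5⟩ := ih
    obtain ⟨hb, hc, hadj⟩ := hbc
    refine ⟨fun x y => hE x y + eh b c x y, fun x y => vE x y + ev b c x y,
      max M (max b.1 c.1), ?_, ?_, ?_, ?_, ?_⟩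
    · intro x y hxy
      simp only
      rw [h1 x y hxy, eh, if_neg, add_zero]
      rintro (⟨rfl, rfl, e1, e2⟩ | ⟨rfl, rfl, e1, e2⟩)
      · rw [← e1, ← e2] at hxy
        rcases hxy with hxy | hxy
        · exact hxy (by simpa [e2] using hb)
        · exact hxy hc
      · rw [← e1, ← e2] at hxy
        rcases hxy with hxy | hxy
        · exact hxy (by simpa [e2] using hc)
        · exact hxy hb
    · intro x y hxy
      simp only
      rw [h2 x y hxy, ev, if_neg, add_zero]
      rintro (⟨rfl, rfl, e1, e2⟩ | ⟨rfl, rfl, e1, e2⟩)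
      · rcases hxy with hxy | hxy
        · exact hxy hb
        · rw [← e1, ← e2] at hxy
          exact hxy hc
      · rcases hxy with hxy | hxy
        · exact hxy hc
        · rw [← e1, ← e2] at hxy
          exact hxy hb
    · intro x y hx
      simp only [max_lt_iff] at hx ⊢
      rw [h3 x y hx.1, eh, if_neg (by omega), add_zero]
    · intro x y hx
      simp only [max_lt_iff] at hx ⊢
      rw [h4 x y hx.1, ev, if_neg (by omega), add_zero]
    · intro x y
      have e1 := h5 x y
      have e2 := edge_boundary hadj x y
      have e3 : ep b x y + ep b x y = 0 := by
        generalize ep b x y = t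
        revert t; decide
      simp only
      linear_combination e1 + e2 + e3

/-- potential of a cycle -/
theorem exists_potential (hE vE : ℤ → ℤ → ZMod 2) (M : ℤ)
    (h3 : ∀ x y, M < x → hE x y = 0) (h4 : ∀ x y, M < x → vE x y = 0)
    (h5 : ∀ x y, hE x y + hE (x - 1) y + vE x y + vE x (y - 1) = 0) :
    ∃ N : ℤ → ℤ → ZMod 2, (∀ x y, N (x - 1) y = N x y + vE x y) ∧
      (∀ x y, N x (y - 1) = N x y + hE x y) := by
  refine ⟨fun x y => ∑ t ∈ Finset.Ioc x M, vE t y, ?_, ?_⟩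
  · have key : ∀ x y, (∑ t ∈ Finset.Ioc (x - 1) M, vE t y)
        = (∑ t ∈ Finset.Ioc x M, vE t y) + vE x y := by
      intro x y
      by_cases hx : M < x
      · rw [h4 x y hx, Finset.Ioc_eq_empty (by omega), Finset.Ioc_eq_empty (by omega)]
        simp
      · have : Finset.Ioc (x - 1) M = insert x (Finset.Ioc x M) := by
          ext t; simp only [Finset.mem_Ioc, Finset.mem_insert]; omega
        rw [this, Finset.sum_insert (by simp), add_comm]
    exact key
  · have key : ∀ (n : ℕ) x y, M - x ≤ n → (∑ t ∈ Finset.Ioc x M, vE t (y - 1))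
        = (∑ t ∈ Finset.Ioc x M, vE t y) + hE x y := by
      intro n
      induction n with
      | zero =>
        intro x y hx
        rw [Finset.Ioc_eq_empty (by push_cast at hx; omega)]
        have a1 := h5 (x + 1) y
        rw [h3 (x+1) y (by push_cast at hx; omega), h4 (x+1) y (by push_cast at hx; omega),
          h4 (x+1) (y-1) (by push_cast at hx; omega)] at a1
        simpa [eq_comm] using a1
      | succ n ih =>
        intro x y hx
        by_cases hx2 : M - x ≤ n
        · exact ih x y hx2
        have : Finset.Ioc x M = insert (x+1) (Finset.Ioc (x+1) M) := by
          ext t; simp only [Finset.mem_Ioc, Finset.mem_insert]; omega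
        rw [this, Finset.sum_insert (by simp), Finset.sum_insert (by simp),
          ih (x+1) y (by push_cast at hx; omega)]
        have a1 := h5 (x + 1) y
        rw [add_sub_cancel_right] at a1
        generalize (∑ t ∈ Finset.Ioc (x+1) M, vE t y) = s at *
        generalize hE (x+1) y = b at *
        generalize hE x y = c at *
        generalize vE (x+1) y = d at *
        generalize vE (x+1) (y-1) = e at *
        revert s b c d e; decide
    intro x y
    exact key (M - x).toNat x y (by omega)

/-- neighbour of `p` in the frame with first axis `u` -/
def nb (p u : ℤ × ℤ) (α β : ℤ) : ℤ × ℤ :=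
  (p.1 + α * u.1 - β * u.2, p.2 + α * u.2 + β * u.1)

/-- frame coordinates of ring neighbours -/
def rc : ℕ → ℤ × ℤ
  | 0 => (-1, -1)
  | 1 => (0, -1)
  | 2 => (1, -1)
  | 3 => (1, 0)
  | 4 => (1, 1)
  | 5 => (0, 1)
  | 6 => (-1, 1)
  | _ => (-1, 0)

/-- the `k`-th neighbour around `p`, number 7 being `p - u` -/
def ring (p u : ℤ × ℤ) (k : ℕ) : ℤ × ℤ := nb p u (rc k).1 (rc k).2

def Dir (u : ℤ × ℤ) : Prop := u = (1, 0) ∨ u = (0, 1) ∨ u = (-1, 0) ∨ u = (0, -1)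

/-- corner offset -/
def cs (t : ℤ) : ℤ := if t = 1 then 0 else 1

/-- corner `k` of pixel `p`, as (a shift of) an integer point -/
def cor (p u : ℤ × ℤ) (k : ℕ) : ℤ × ℤ :=
  match k with
  | 0 => (p.1 - cs (- u.1 + u.2), p.2 - cs (- u.2 - u.1))
  | 1 => (p.1 - cs (u.1 + u.2), p.2 - cs (u.2 - u.1))
  | 2 => (p.1 - cs (u.1 - u.2), p.2 - cs (u.2 + u.1))
  | _ => (p.1 - cs (- u.1 - u.2), p.2 - cs (- u.2 + u.1))

theorem cor_ring (p u : ℤ × ℤ) (hu : Dir u) (k c : ℕ) (hk : k < 7)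
    (hc : c = k / 2 ∨ c = (k + 1) / 2) :
    ((cor p u c).1 = (ring p u k).1 ∨ (cor p u c).1 = (ring p u k).1 - 1) ∧
    ((cor p u c).2 = (ring p u k).2 ∨ (cor p u c).2 = (ring p u k).2 - 1) := by
  obtain ⟨x, y⟩ := p
  rcases hu with rfl | rfl | rfl | rfl <;> interval_cases k <;> rcases hc with rfl | rfl <;>
    simp [cor, ring, nb, rc, cs] <;> omega

theorem ring_ne (p u : ℤ × ℤ) (hu : Dir u) (k : ℕ) : ring p u k ≠ p := by
  obtain ⟨x, y⟩ := p
  rcases hu with rfl | rfl | rfl | rfl <;> unfold ring rc nb <;> split <;> simp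

theorem ring_a8 (p u : ℤ × ℤ) (hu : Dir u) (k : ℕ) : A8 p (ring p u k) := by
  obtain ⟨x, y⟩ := p
  rcases hu with rfl | rfl | rfl | rfl <;> unfold ring rc nb A8 <;> split <;> simp <;> omega

theorem ring_a4 (p u : ℤ × ℤ) (hu : Dir u) (k : ℕ) (hk : k % 2 = 1) (hk7 : k ≤ 7) :
    A4 p (ring p u k) := by
  obtain ⟨x, y⟩ := p
  rcases hu with rfl | rfl | rfl | rfl <;> interval_cases k <;>
    first | omega | (simp [ring, rc, nb, A4])

theorem ring_succ (p u : ℤ × ℤ) (hu : Dir u) (k : ℕ) (hk : k < 6) :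
    A8 (ring p u k) (ring p u (k+1)) := by
  obtain ⟨x, y⟩ := p
  rcases hu with rfl | rfl | rfl | rfl <;> interval_cases k <;>
    simp only [ring, rc, nb, A8] <;> omega

theorem ring_succ2 (p u : ℤ × ℤ) (hu : Dir u) (k : ℕ) (hk : k < 5) (hk2 : k % 2 = 1) :
    A8 (ring p u k) (ring p u (k+2)) := by
  obtain ⟨x, y⟩ := p
  rcases hu with rfl | rfl | rfl | rfl <;> interval_cases k <;>
    first | omega | (simp only [ring, rc, nb, A8]; omega)

theorem exists_ring_of_a8 (p u q : ℤ × ℤ) (hu : Dir u) (h : A8 p q) (hne : q ≠ p) :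
    ∃ k ≤ 7, q = ring p u k := by
  obtain ⟨x, y⟩ := p
  obtain ⟨x', y'⟩ := q
  simp only [A8] at h
  obtain ⟨dx, rfl⟩ : ∃ d, x' = x + d := ⟨x' - x, by ring⟩
  obtain ⟨dy, rfl⟩ : ∃ d, y' = y + d := ⟨y' - y, by ring⟩
  have h1 : -1 ≤ dx := by omega
  have h2 : dx ≤ 1 := by omega
  have h3 : -1 ≤ dy := by omega
  have h4 : dy ≤ 1 := by omega
  have hne' : ¬ (dx = 0 ∧ dy = 0) := by
    rintro ⟨rfl, rfl⟩; simp at hne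
  clear hne h
  by_contra hcon
  push Not at hcon
  have c0 := hcon 0 (by norm_num)
  have c1 := hcon 1 (by norm_num)
  have c2 := hcon 2 (by norm_num)
  have c3 := hcon 3 (by norm_num)
  have c4 := hcon 4 (by norm_num)
  have c5 := hcon 5 (by norm_num)
  have c6 := hcon 6 (by norm_num)
  have c7 := hcon 7 (by norm_num)
  clear hcon
  rcases hu with rfl | rfl | rfl | rfl <;>
    simp only [ring, nb, rc, ne_eq, Prod.mk.injEq] at c0 c1 c2 c3 c4 c5 c6 c7 <;> omega

theorem exists_dir_of_a4 (p q : ℤ × ℤ) (h : A4 p q) : ∃ u, Dir u ∧ q = ring p u 7 := by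
  obtain ⟨x, y⟩ := p
  obtain ⟨x', y'⟩ := q
  simp only [A4] at h
  rcases h with ⟨h1, h2 | h2⟩ | ⟨h1, h2 | h2⟩
  · refine ⟨(0, -1), by simp [Dir], ?_⟩
    simp [ring, nb, rc]; omega
  · refine ⟨(0, 1), by simp [Dir], ?_⟩
    simp [ring, nb, rc]; omega
  · refine ⟨(-1, 0), by simp [Dir], ?_⟩
    simp [ring, nb, rc]; omega
  · refine ⟨(1, 0), by simp [Dir], ?_⟩
    simp [ring, nb, rc]; omega

/-- Digital Jordan lemma. -/
theorem jordan {X : Set (ℤ × ℤ)} {p u : ℤ × ℤ} (hu : Dir u) (hp : p ∈ X) {i e j : ℕ}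
    (hie : i < e) (hej : e < j) (hj : j < 7) (he : e % 2 = 1)
    (hi' : ring p u i ∈ X) (hj' : ring p u j ∈ X)
    (hB : Cn A4 Xᶜ (ring p u 7) (ring p u e)) (hm : ring p u 7 ∉ X) (heX : ring p u e ∉ X) :
    ¬ Cn A8 (X \ {p}) (ring p u i) (ring p u j) := by
  intro hcon
  obtain ⟨h0, v0, M0, a1, a2, a3, a4, a5⟩ := exists_chain hB
  have hm4 : A4 p (ring p u 7) := ring_a4 p u hu 7 (by norm_num) (by norm_num)
  have he4 : A4 p (ring p u e) := ring_a4 p u hu e he (by omega)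
  set m := ring p u 7 with hmdef
  set e' := ring p u e with hedef
  set h : ℤ → ℤ → ZMod 2 := fun x y => h0 x y + eh p m x y + eh p e' x y with hh
  set v : ℤ → ℤ → ZMod 2 := fun x y => v0 x y + ev p m x y + ev p e' x y with hv
  obtain ⟨N, n1, n2⟩ := exists_potential h v (max M0 (max p.1 (max m.1 e'.1))) (by
    intro x y hx
    simp only [max_lt_iff] at hx
    simp only [hh]
    rw [a3 x y hx.1, eh, eh, if_neg (by omega), if_neg (by omega)]; rfl) (by
    intro x y hx
    simp only [max_lt_iff] at hx
    simp only [hv]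
    rw [a4 x y hx.1, ev, ev, if_neg (by omega), if_neg (by omega)]; rfl) (by
    intro x y
    have b1 := edge_boundary hm4 x y
    have b2 := edge_boundary he4 x y
    have b3 := a5 x y
    have b4 : ∀ t : ZMod 2, t + t = 0 := by decide
    simp only [hh, hv]
    linear_combination b1 + b2 + b3 + b4 (ep m x y) + b4 (ep e' x y) + b4 (ep p x y))
  -- edges at pixels of `X \ {p}` carry no weight
  have hzero : ∀ x y, (x, y) ∈ X \ {p} → h x y = 0 ∧ h (x - 1) y = 0 ∧ v x y = 0 ∧
      v x (y - 1) = 0 := by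
    intro x y hxy
    have q1 : ¬ (p.1 = x ∧ p.2 = y) := fun hc => hxy.2 (by
      rw [Set.mem_singleton_iff]; exact Prod.ext hc.1.symm hc.2.symm)
    have q2 : ¬ (m.1 = x ∧ m.2 = y) := fun hc => hm (by
      have : m = (x, y) := Prod.ext hc.1 hc.2
      rw [this]; exact hxy.1)
    have q3 : ¬ (e'.1 = x ∧ e'.2 = y) := fun hc => heX (by
      have : e' = (x, y) := Prod.ext hc.1 hc.2
      rw [this]; exact hxy.1)
    have hX : (x, y) ∉ Xᶜ := fun hc => hc hxy.1
    simp only [hh, hv, eh, ev]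
    refine ⟨?_, ?_, ?_, ?_⟩
    · rw [a1 x y (Or.inl hX), if_neg (by omega), if_neg (by omega)]; rfl
    · rw [a1 (x-1) y (Or.inr (by simpa using hxy.1)), if_neg (by omega), if_neg (by omega)]; rfl
    · rw [a2 x y (Or.inl hX), if_neg (by omega), if_neg (by omega)]; rfl
    · rw [a2 x (y-1) (Or.inr (by simpa using hxy.1)), if_neg (by omega), if_neg (by omega)]; rfl
  have hcorn : ∀ q ∈ X \ {p}, ∀ c : ℤ × ℤ, (c.1 = q.1 ∨ c.1 = q.1 - 1) →
      (c.2 = q.2 ∨ c.2 = q.2 - 1) → N c.1 c.2 = N q.1 q.2 := by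
    rintro ⟨x, y⟩ hq ⟨cx, cy⟩ h1 h2
    obtain ⟨z1, z2, z3, z4⟩ := hzero x y hq
    have r1 := n1 x y
    have r2 := n2 x y
    have r3 := n2 (x - 1) y
    rw [z3, add_zero] at r1
    rw [z1, add_zero] at r2
    rw [z2, add_zero] at r3
    simp only at h1 h2 ⊢
    rcases h1 with rfl | rfl <;> rcases h2 with rfl | rfl
    · rfl
    · exact r2
    · exact r1
    · rw [r3, r1]
  have hstep : ∀ a ∈ X \ {p}, ∀ b ∈ X \ {p}, A8 a b → N a.1 a.2 = N b.1 b.2 := by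
    intro a ha b hb hab
    have : ∃ c : ℤ × ℤ, ((c.1 = a.1 ∨ c.1 = a.1 - 1) ∧ (c.2 = a.2 ∨ c.2 = a.2 - 1)) ∧
        ((c.1 = b.1 ∨ c.1 = b.1 - 1) ∧ (c.2 = b.2 ∨ c.2 = b.2 - 1)) := by
      unfold A8 at hab
      refine ⟨(min a.1 b.1, min a.2 b.2), ?_⟩
      simp only
      omega
    obtain ⟨c, ⟨c1, c2⟩, c3, c4⟩ := this
    rw [← hcorn a ha c c1 c2, ← hcorn b hb c c3 c4]
  have hconst : N (ring p u i).1 (ring p u i).2 = N (ring p u j).1 (ring p u j).2 := by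
    have : ∀ b, Cn A8 (X \ {p}) (ring p u i) b → N (ring p u i).1 (ring p u i).2 = N b.1 b.2 := by
      intro b hb
      induction hb with
      | refl => rfl
      | tail _ hbc ih => rw [ih, hstep _ hbc.1 _ hbc.2.1 hbc.2.2]
    exact this _ hcon
  have hri := fun c hc => cor_ring p u hu i c (by omega) hc
  have hrj := fun c hc => cor_ring p u hu j c (by omega) hc
  have hi1 : ring p u i ∈ X \ {p} := ⟨hi', ring_ne p u hu i⟩
  have hj1 : ring p u j ∈ X \ {p} := ⟨hj', ring_ne p u hu j⟩
  have Ni : ∀ c, (c = i / 2 ∨ c = (i + 1) / 2) →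
      N (cor p u c).1 (cor p u c).2 = N (ring p u i).1 (ring p u i).2 :=
    fun c hc => hcorn _ hi1 _ (hri c hc).1 (hri c hc).2
  have Nj : ∀ c, (c = j / 2 ∨ c = (j + 1) / 2) →
      N (cor p u c).1 (cor p u c).2 = N (ring p u j).1 (ring p u j).2 :=
    fun c hc => hcorn _ hj1 _ (hrj c hc).1 (hrj c hc).2
  -- weights at `p`
  have hpX : p ∉ Xᶜ := fun hc => hc hp
  have hp1 : h p.1 p.2 = eh p m p.1 p.2 + eh p e' p.1 p.2 := by
    simp only [hh]; rw [a1 _ _ (Or.inl hpX), zero_add]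
  have hp2 : h (p.1 - 1) p.2 = eh p m (p.1 - 1) p.2 + eh p e' (p.1 - 1) p.2 := by
    simp only [hh]; rw [a1 _ _ (Or.inr (by simpa using hp)), zero_add]
  have hp3 : v p.1 p.2 = ev p m p.1 p.2 + ev p e' p.1 p.2 := by
    simp only [hv]; rw [a2 _ _ (Or.inl hpX), zero_add]
  have hp4 : v p.1 (p.2 - 1) = ev p m p.1 (p.2 - 1) + ev p e' p.1 (p.2 - 1) := by
    simp only [hv]; rw [a2 _ _ (Or.inr (by simpa using hp)), zero_add]
  have m1 := n1 p.1 p.2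
  have m2 := n1 p.1 (p.2 - 1)
  have m3 := n2 p.1 p.2
  have m4 := n2 (p.1 - 1) p.2
  rw [hp3] at m1
  rw [hp4] at m2
  rw [hp1] at m3
  rw [hp2] at m4
  -- the four corners of `p`
  have hall : ∀ k : ℕ, k < 3 →
      N (cor p u (k+1)).1 (cor p u (k+1)).2 = N (cor p u k).1 (cor p u k).2 +
        (if e = 2 * k + 1 then 1 else 0) := by
    clear hconst Ni Nj hri hrj hi1 hj1 hstep hcorn hzero hp1 hp2 hp3 hp4 n1 n2 hcon
    clear a1 a2 a3 a4 a5 hB hm heX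
    clear_value h v
    obtain ⟨x, y⟩ := p
    intro k hk
    have he3 : e = 1 ∨ e = 3 ∨ e = 5 := by omega
    have two : ∀ s t : ZMod 2, s = t + 1 → t = s + 1 := by decide
    have z10 : (1 : ZMod 2) + 0 = 1 := rfl
    have z01 : (0 : ZMod 2) + 1 = 1 := rfl
    have z11 : (1 : ZMod 2) + 1 = 0 := rfl
    rcases hu with rfl | rfl | rfl | rfl <;> rcases he3 with rfl | rfl | rfl <;>
      interval_cases k <;>
      simp [cor, cs, hmdef, hedef, ring, rc, nb, eh, ev] at m1 m2 m3 m4 ⊢ <;>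
      grind
  have g0 := hall 0 (by norm_num)
  have g1 := hall 1 (by norm_num)
  have g2 := hall 2 (by norm_num)
  have Ni1 := Ni _ (Or.inl rfl)
  have Nj1 := Nj _ (Or.inl rfl)
  rw [hconst] at Ni1
  rw [← Nj1] at Ni1
  have Nj2 := Nj _ (Or.inr rfl)
  rw [← Nj1] at Nj2
  have Ni2 := Ni _ (Or.inr rfl)
  rw [hconst, ← Nj1] at Ni2
  clear hall Ni Nj
  generalize hc : (fun k : ℕ => N (cor p u k).1 (cor p u k).2) = f
  have hc' : ∀ k : ℕ, N (cor p u k).1 (cor p u k).2 = f k := fun k => by rw [← hc]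
  simp only [hc'] at g0 g1 g2 Ni1 Ni2 Nj2
  have key : ∀ a b c d : ZMod 2, ¬ (a = b + 1 ∧ a = b) := by decide
  have he3 : e = 1 ∨ e = 3 ∨ e = 5 := by omega
  rcases he3 with rfl | rfl | rfl <;> interval_cases i <;> interval_cases j <;>
    simp at g0 g1 g2 Ni1 Ni2 Nj2 <;> grind

/-- `p` is a simple pixel of `S` with missing neighbour `p - u`. -/
def Simple (S : Set (ℤ × ℤ)) (p u : ℤ × ℤ) : Prop :=
  ring p u 7 ∉ S ∧ (∃ k < 7, ring p u k ∈ S) ∧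
    ∀ i e j : ℕ, i < e → e < j → j < 7 → e % 2 = 1 → ring p u i ∈ S → ring p u j ∈ S →
      ring p u e ∈ S

/-- `Q ⊆ X` induces bijections on foreground and background components. -/
structure Good (Q X : Set (ℤ × ℤ)) : Prop where
  sub : Q ⊆ X
  fgs : ∀ x ∈ X, ∃ q ∈ Q, Cn A8 X x q
  fgi : ∀ q ∈ Q, ∀ q' ∈ Q, Cn A8 X q q' → Cn A8 Q q q'
  bgi : ∀ b ∉ X, ∀ b' ∉ X, Cn A4 Qᶜ b b' → Cn A4 Xᶜ b b'
  bgs : ∀ x ∉ Q, ∃ b ∉ X, Cn A4 Qᶜ x b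

theorem simple_conn {S : Set (ℤ × ℤ)} {p u : ℤ × ℤ} (hu : Dir u) (hs : Simple S p u)
    {i j : ℕ} (hij : i < j) (hj : j < 7) (hi' : ring p u i ∈ S) (hj' : ring p u j ∈ S) :
    Cn A8 (S \ {p}) (ring p u i) (ring p u j) := by
  induction hn : j - i using Nat.strong_induction_on generalizing i with
  | _ n ih =>
    have mi : ring p u i ∈ S \ {p} := ⟨hi', ring_ne p u hu i⟩
    have mj : ring p u j ∈ S \ {p} := ⟨hj', ring_ne p u hu j⟩
    by_cases h1 : i + 1 = j
    · subst h1
      exact Cn.single mi mj (ring_succ p u hu i (by omega))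
    rcases Nat.mod_two_eq_zero_or_one i with h2 | h2
    · have hk : ring p u (i+1) ∈ S := hs.2.2 i (i+1) j (by omega) (by omega) hj (by omega) hi' hj'
      exact (Cn.single mi ⟨hk, ring_ne p u hu _⟩ (ring_succ p u hu i (by omega))).trans
        (ih (j - (i+1)) (by omega) (by omega) hk rfl)
    · by_cases h3 : i + 2 = j
      · subst h3
        exact Cn.single mi mj (ring_succ2 p u hu i (by omega) h2)
      have hk : ring p u (i+2) ∈ S := hs.2.2 i (i+2) j (by omega) (by omega) hj (by omega) hi' hj'
      exact (Cn.single mi ⟨hk, ring_ne p u hu _⟩ (ring_succ2 p u hu i (by omega) h2)).trans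
        (ih (j - (i+2)) (by omega) (by omega) hk rfl)

theorem simple_conn' {S : Set (ℤ × ℤ)} {p u a b : ℤ × ℤ} (hu : Dir u) (hs : Simple S p u)
    (ha : a ∈ S \ {p}) (hb : b ∈ S \ {p}) (hpa : A8 p a) (hpb : A8 p b) :
    Cn A8 (S \ {p}) a b := by
  obtain ⟨i, hi, rfl⟩ := exists_ring_of_a8 p u a hu hpa ha.2
  obtain ⟨j, hj, rfl⟩ := exists_ring_of_a8 p u b hu hpb hb.2
  have hi7 : i ≠ 7 := by rintro rfl; exact hs.1 ha.1
  have hj7 : j ≠ 7 := by rintro rfl; exact hs.1 hb.1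
  rcases lt_trichotomy i j with h | rfl | h
  · exact simple_conn hu hs h (by omega) ha.1 hb.1
  · exact Cn.refl _
  · exact (simple_conn hu hs h (by omega) hb.1 ha.1).symm8

/-- Removing a simple pixel preserves connectivity. -/
theorem simple_reroute {S : Set (ℤ × ℤ)} {p u a : ℤ × ℤ} (hu : Dir u) (hs : Simple S p u)
    (ha : a ∈ S \ {p}) {b : ℤ × ℤ} (h : Cn A8 S a b) :
    (b ≠ p → Cn A8 (S \ {p}) a b) ∧
      (b = p → ∃ c ∈ S \ {p}, A8 p c ∧ Cn A8 (S \ {p}) a c) := by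
  induction h with
  | refl => exact ⟨fun _ => Cn.refl _, fun h => (ha.2 h).elim⟩
  | @tail b c _ hbc ih =>
    obtain ⟨hb, hc, hadj⟩ := hbc
    by_cases hbp : b = p
    · subst hbp
      obtain ⟨d, hd, hbd, hcd⟩ := ih.2 rfl
      refine ⟨fun hne => hcd.trans (simple_conn' hu hs hd ⟨hc, hne⟩ hbd hadj), fun _ => ?_⟩
      exact ⟨d, hd, hbd, hcd⟩
    · have := ih.1 hbp
      refine ⟨fun hne => this.trans (Cn.single ⟨hb, hbp⟩ ⟨hc, hne⟩ hadj), ?_⟩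
      rintro rfl
      exact ⟨b, ⟨hb, hbp⟩, hadj.symm, this⟩

theorem Good.erase {Q X : Set (ℤ × ℤ)} (hg : Good Q X) {p u : ℤ × ℤ} (hpQ : p ∉ Q)
    (hu : Dir u) (hs : Simple X p u) : Good Q (X \ {p}) where
  sub := fun q hq => ⟨hg.sub hq, fun h => hpQ (h ▸ hq)⟩
  fgs := fun x hx => by
    obtain ⟨q, hq, hc⟩ := hg.fgs x hx.1
    exact ⟨q, hq, (simple_reroute hu hs hx hc).1 (fun h => hpQ (h ▸ hq))⟩
  fgi := fun q hq q' hq' h => hg.fgi q hq q' hq' (h.mono (fun _ _ h => h) sdiff_subset)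
  bgi := by
    have hm4 : A4 p (ring p u 7) := ring_a4 p u hu 7 (by norm_num) (by norm_num)
    have hmQ : ring p u 7 ∉ Q := fun h => hs.1 (hg.sub h)
    have key : ∀ b ∉ X \ {p}, ∃ b' ∉ X, Cn A4 Qᶜ b b' ∧ Cn A4 (X \ {p})ᶜ b b' := by
      intro b hb
      by_cases hbp : b = p
      · subst hbp
        exact ⟨_, hs.1, Cn.single hpQ hmQ hm4, Cn.single hb (fun h => hs.1 h.1) hm4⟩
      · exact ⟨b, fun h => hb ⟨h, hbp⟩, Cn.refl _, Cn.refl _⟩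
    intro b hb b' hb' h
    obtain ⟨c, hc, c1, c2⟩ := key b hb
    obtain ⟨c', hc', c1', c2'⟩ := key b' hb'
    have := hg.bgi c hc c' hc' (c1.symm4.trans (h.trans c1'))
    exact c2.trans ((this.mono (fun _ _ h => h) (compl_subset_compl.2 sdiff_subset)).trans c2'.symm4)
  bgs := fun x hx => by
    obtain ⟨b, hb, h⟩ := hg.bgs x hx
    exact ⟨b, fun h => hb h.1, h⟩

/-- At a non-simple pixel of `X \ Q` with a missing 4-neighbour there is a separated pair. -/
theorem gap_of_not_simple {Q X : Set (ℤ × ℤ)} (hg : Good Q X) {p u : ℤ × ℤ} (hp : p ∈ X)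
    (hpQ : p ∉ Q) (hu : Dir u) (hm : ring p u 7 ∉ X) (hns : ¬ Simple X p u) :
    ∃ a ∈ X \ {p}, ∃ b ∈ X \ {p}, A8 p a ∧ A8 p b ∧ ¬ Cn A8 (X \ {p}) a b := by
  have hne : ∃ k < 7, ring p u k ∈ X := by
    by_contra hcon
    push Not at hcon
    obtain ⟨q, hq, hc⟩ := hg.fgs p hp
    have : ∀ b, Cn A8 X p b → b = p := by
      intro b hb
      induction hb with
      | refl => rfl
      | @tail b c _ hbc ih =>
        subst ih
        by_contra hcp
        obtain ⟨k, hk, rfl⟩ := exists_ring_of_a8 b u c hu hbc.2.2 hcp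
        rcases Nat.lt_or_ge k 7 with h | h
        · exact hcon k h hbc.2.1
        · have : k = 7 := by omega
          subst this
          exact hm hbc.2.1
    exact hpQ (this q hc ▸ hq)
  have : ¬ ∀ i e j : ℕ, i < e → e < j → j < 7 → e % 2 = 1 → ring p u i ∈ X → ring p u j ∈ X →
      ring p u e ∈ X := fun h => hns ⟨hm, hne, h⟩
  push Not at this
  obtain ⟨i, e, j, h1, h2, h3, h4, h5, h6, h7⟩ := this
  refine ⟨_, ⟨h5, ring_ne p u hu i⟩, _, ⟨h6, ring_ne p u hu j⟩, ring_a8 p u hu i,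
    ring_a8 p u hu j, ?_⟩
  refine jordan hu hp h1 h2 h3 h4 h5 h6 ?_ hm h7
  refine hg.bgi _ hm _ h7 ?_
  have q1 : ring p u 7 ∈ Qᶜ := fun h => hm (hg.sub h)
  have q2 : ring p u e ∈ Qᶜ := fun h => h7 (hg.sub h)
  exact (Cn.single q1 hpQ (ring_a4 p u hu 7 (by norm_num) (by norm_num)).symm).trans
    (Cn.single hpQ q2 (ring_a4 p u hu e h4 (by omega)))

theorem no_free_part {Q X : Set (ℤ × ℤ)} (hg : Good Q X) (hX : X.Finite)
    (hns : ∀ p ∈ X, p ∉ Q → ∀ u, Dir u → ¬ Simple X p u) (n : ℕ) :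
    ∀ p ∈ X, ∀ i ∈ X \ {p}, A8 p i → (∀ y, Cn A8 (X \ {p}) i y → y ∉ Q) →
      {y | Cn A8 (X \ {p}) i y}.ncard ≤ n → False := by
  induction n using Nat.strong_induction_on with
  | _ n ih =>
  intro p hp i hi hpi hQ hn
  set Y := {y | Cn A8 (X \ {p}) i y} with hY
  have hYX : Y ⊆ X \ {p} := fun y hy => Cn.mem hy hi
  have hYf : Y.Finite := hX.subset (hYX.trans sdiff_subset)
  have hiY : i ∈ Y := Cn.refl i
  obtain ⟨a, haY, ha⟩ := Set.exists_min_image Y (fun q => q.1) hYf ⟨i, hiY⟩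
  obtain ⟨b, hbY, hb⟩ := Set.exists_max_image Y (fun q => q.1) hYf ⟨i, hiY⟩
  have hout : ∀ q ∈ Y, ∀ r, A8 q r → r ∉ Y → r ≠ p → r ∉ X := by
    intro q hq r hqr hr hrp hrX
    exact hr (Cn.trans hq (Cn.single (hYX hq) ⟨hrX, hrp⟩ hqr))
  -- a pixel of `Y` with a missing 4-neighbour
  obtain ⟨p', hp'Y, r, hr4, hrX⟩ : ∃ p' ∈ Y, ∃ r, A4 p' r ∧ r ∉ X := by
    by_cases h1 : (a.1 - 1, a.2) = p
    · refine ⟨b, hbY, (b.1 + 1, b.2), by simp [A4], hout b hbY _ (by simp [A8]; omega) ?_ ?_⟩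
      · intro h
        have := hb _ h
        simp at this
      · intro h2
        have h3 := ha b hbY
        rw [← h1] at h2
        simp only [Prod.mk.injEq] at h2
        omega
    · refine ⟨a, haY, (a.1 - 1, a.2), by simp [A4], hout a haY _ (by simp [A8]; omega) ?_ h1⟩
      intro h
      have := ha _ h
      simp at this
  obtain ⟨u, hu, rfl⟩ := exists_dir_of_a4 _ _ hr4
  have hp'X := (hYX hp'Y).1
  have hp'p : p' ≠ p := (hYX hp'Y).2
  have hp'Q := hQ p' hp'Y
  obtain ⟨c, hc, d, hd, hpc, hpd, hcd⟩ :=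
    gap_of_not_simple hg hp'X hp'Q hu hrX (hns p' hp'X hp'Q u hu)
  -- choose the part not containing `p`
  obtain ⟨i', hi', hpi', hnp⟩ : ∃ i' ∈ X \ {p'}, A8 p' i' ∧ ¬ Cn A8 (X \ {p'}) i' p := by
    by_cases h : Cn A8 (X \ {p'}) c p
    · exact ⟨d, hd, hpd, fun h' => hcd (h.trans h'.symm8)⟩
    · exact ⟨c, hc, hpc, h⟩
  have hi'p : i' ≠ p := by rintro rfl; exact hnp (Cn.refl _)
  have hsub : ∀ y, Cn A8 (X \ {p'}) i' y → y ∈ Y := by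
    intro y hy
    induction hy with
    | refl => exact Cn.trans hp'Y (Cn.single (hYX hp'Y) ⟨hi'.1, hi'p⟩ hpi')
    | @tail s t hs hst ih2 =>
      refine Cn.trans ih2 (Cn.single (hYX ih2) ⟨hst.2.1.1, ?_⟩ hst.2.2)
      rintro rfl
      exact hnp (Relation.ReflTransGen.tail hs hst)
  have hss : {y | Cn A8 (X \ {p'}) i' y} ⊂ Y := by
    refine (Set.ssubset_iff_of_subset (fun y hy => hsub y hy)).2 ⟨p', hp'Y, fun h => ?_⟩
    exact (Cn.mem h hi').2 rfl
  have hlt := Set.ncard_lt_ncard hss hYf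
  exact ih _ (lt_of_lt_of_le hlt hn) p' hp'X i' hi' hpi' (fun y hy => hQ y (hsub y hy)) le_rfl

theorem exists_simple {Q X : Set (ℤ × ℤ)} (hg : Good Q X) (hX : X.Finite) (hne : X ≠ Q) :
    ∃ p ∈ X, p ∉ Q ∧ ∃ u, Dir u ∧ Simple X p u := by
  by_contra hcon
  push Not at hcon
  obtain ⟨x, hx, hxQ⟩ : ∃ x ∈ X, x ∉ Q := by
    by_contra h
    push Not at h
    exact hne (Set.Subset.antisymm h hg.sub)
  obtain ⟨b, hb, hc⟩ := hg.bgs x hxQ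
  -- first exit
  obtain ⟨p, hp, hpQ, r, hr, hr4⟩ : ∃ p ∈ X, p ∉ Q ∧ ∃ r ∉ X, A4 p r := by
    by_contra h
    push Not at h
    have : ∀ y, Cn A4 Qᶜ x y → y ∈ X := by
      intro y hy
      induction hy with
      | refl => exact hx
      | @tail s t _ hst ih =>
        by_contra ht
        exact h s ih hst.1 t ht hst.2.2
    exact hb (this b hc)
  obtain ⟨u, hu, rfl⟩ := exists_dir_of_a4 _ _ hr4
  obtain ⟨c, hc, d, hd, hpc, hpd, hcd⟩ :=
    gap_of_not_simple hg hp hpQ hu hr (hcon p hp hpQ u hu)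
  by_cases h1 : ∀ y, Cn A8 (X \ {p}) c y → y ∉ Q
  · exact no_free_part hg hX hcon _ p hp c hc hpc h1 le_rfl
  by_cases h2 : ∀ y, Cn A8 (X \ {p}) d y → y ∉ Q
  · exact no_free_part hg hX hcon _ p hp d hd hpd h2 le_rfl
  push Not at h1 h2
  obtain ⟨y, hy, hyQ⟩ := h1
  obtain ⟨z, hz, hzQ⟩ := h2
  have m8 : ∀ {a b}, Cn A8 (X \ {p}) a b → Cn A8 X a b :=
    fun h => h.mono (fun _ _ h => h) sdiff_subset
  have hyz : Cn A8 X y z :=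
    (m8 hy).symm8.trans ((Cn.single hc.1 hp hpc.symm).trans
      ((Cn.single hp hd.1 hpd).trans (m8 hz)))
  have := hg.fgi y hyQ z hzQ hyz
  have h3 : Cn A8 (X \ {p}) y z := this.mono (fun _ _ h => h)
    (fun q hq => ⟨hg.sub hq, fun h => hpQ (h ▸ hq)⟩)
  exact hcd (hy.trans (h3.trans hz.symm8))

/-- Homotopy equivalences from straight-line homotopies. -/
theorem homotopyEquiv_of_segments {X Y : Set Plane} (f g : Plane → Plane)
    (hf : ContinuousOn f X) (hg : ContinuousOn g Y) (hfX : MapsTo f X Y) (hgY : MapsTo g Y X)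
    (hX : ∀ x ∈ X, segment ℝ x (g (f x)) ⊆ X) (hY : ∀ y ∈ Y, segment ℝ y (f (g y)) ⊆ Y) :
    Nonempty (ContinuousMap.HomotopyEquiv ↥X ↥Y) := by
  have aux : ∀ {Z : Set Plane} (k : C(↥Z, ↥Z)),
      (∀ z : Z, segment ℝ (z : Plane) (k z : Plane) ⊆ Z) →
      ContinuousMap.Homotopic k (ContinuousMap.id ↥Z) := by
    intro Z k hk
    have hmem : ∀ w : unitInterval × ↥Z,
        (1 - (w.1 : ℝ)) • (k w.2 : Plane) + (w.1 : ℝ) • (w.2 : Plane) ∈ Z := by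
      rintro ⟨t, z⟩
      refine hk z ?_
      refine ⟨t, 1 - t, t.2.1, by linarith [t.2.2], by ring, ?_⟩
      simp only
      rw [add_comm]
    refine ⟨⟨⟨fun w => ⟨_, hmem w⟩, ?_⟩, ?_, ?_⟩⟩
    · refine Continuous.subtype_mk ?_ _
      have h1 : Continuous fun w : unitInterval × ↥Z => (w.1 : ℝ) :=
        continuous_subtype_val.comp continuous_fst
      have h2 : Continuous fun w : unitInterval × ↥Z => (w.2 : Plane) :=
        continuous_subtype_val.comp continuous_snd
      have h3 : Continuous fun w : unitInterval × ↥Z => (k w.2 : Plane) :=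
        continuous_subtype_val.comp (k.continuous.comp continuous_snd)
      exact ((continuous_const.sub h1).smul h3).add (h1.smul h2)
    · intro z
      apply Subtype.ext
      simp
    · intro z
      apply Subtype.ext
      simp
  refine ⟨⟨⟨fun x => ⟨f x, hfX x.2⟩, ?_⟩, ⟨fun y => ⟨g y, hgY y.2⟩, ?_⟩, ?_, ?_⟩⟩
  · exact Continuous.subtype_mk (continuousOn_iff_continuous_domRestrict.1 hf) _
  · exact Continuous.subtype_mk (continuousOn_iff_continuous_domRestrict.1 hg) _
  · exact aux _ (fun z => hX z z.2)
  · exact aux _ (fun z => hY z z.2)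

/-- closed unit square -/
def sq (q : ℤ × ℤ) : Set Plane :=
  {z | ((q.1 : ℝ) ≤ z 0 ∧ z 0 ≤ q.1 + 1) ∧ ((q.2 : ℝ) ≤ z 1 ∧ z 1 ≤ q.2 + 1)}

/-- realization of a set of pixels -/
def rl (S : Set (ℤ × ℤ)) : Set Plane := {z | ∃ q ∈ S, z ∈ sq q}

theorem isClosed_sq (q : ℤ × ℤ) : IsClosed (sq q) := by
  have h0 : Continuous fun z : Plane => z 0 := continuous_apply 0
  have h1 : Continuous fun z : Plane => z 1 := continuous_apply 1
  exact ((isClosed_le continuous_const h0).inter (isClosed_le h0 continuous_const)).inter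
    ((isClosed_le continuous_const h1).inter (isClosed_le h1 continuous_const))

theorem convex_sq (q : ℤ × ℤ) : Convex ℝ (sq q) := by
  intro x hx y hy a b ha hb hab
  obtain ⟨⟨x1, x2⟩, x3, x4⟩ := hx
  obtain ⟨⟨y1, y2⟩, y3, y4⟩ := hy
  have hb' : b = 1 - a := by linarith
  subst hb'
  refine ⟨⟨?_, ?_⟩, ?_, ?_⟩ <;> simp only [Pi.add_apply, Pi.smul_apply, smul_eq_mul] <;>
    nlinarith

theorem isClosed_rl {S : Set (ℤ × ℤ)} (hS : S.Finite) : IsClosed (rl S) := by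
  have : rl S = ⋃ q ∈ S, sq q := by
    ext z; simp [rl]
  rw [this]
  exact hS.isClosed_biUnion (fun q _ => isClosed_sq q)

def fx (p u : ℤ × ℤ) (z : Plane) : ℝ :=
  u.1 * (z 0 - (p.1 + 1 / 2)) + u.2 * (z 1 - (p.2 + 1 / 2))

def fy (p u : ℤ × ℤ) (z : Plane) : ℝ :=
  -u.2 * (z 0 - (p.1 + 1 / 2)) + u.1 * (z 1 - (p.2 + 1 / 2))

def mk (p u : ℤ × ℤ) (x y : ℝ) : Plane :=
  ![p.1 + 1 / 2 + x * u.1 - y * u.2, p.2 + 1 / 2 + x * u.2 + y * u.1]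

theorem fx_mk (p u : ℤ × ℤ) (hu : Dir u) (x y : ℝ) : fx p u (mk p u x y) = x := by
  rcases hu with rfl | rfl | rfl | rfl <;> simp [fx, mk]

theorem fy_mk (p u : ℤ × ℤ) (hu : Dir u) (x y : ℝ) : fy p u (mk p u x y) = y := by
  rcases hu with rfl | rfl | rfl | rfl <;> simp [fy, mk]

theorem mk_fx_fy (p u : ℤ × ℤ) (hu : Dir u) (z : Plane) : mk p u (fx p u z) (fy p u z) = z := by
  ext i
  rcases hu with rfl | rfl | rfl | rfl <;> fin_cases i <;> simp [fx, fy, mk]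

theorem mem_sq_nb (p u : ℤ × ℤ) (hu : Dir u) (α β : ℤ) (z : Plane) :
    z ∈ sq (nb p u α β) ↔ (α - 1 / 2 ≤ fx p u z ∧ fx p u z ≤ α + 1 / 2) ∧
      (β - 1 / 2 ≤ fy p u z ∧ fy p u z ≤ β + 1 / 2) := by
  rcases hu with rfl | rfl | rfl | rfl <;>
    simp only [sq, nb, fx, fy, mem_setOf_eq] <;> push_cast <;>
    constructor <;> rintro ⟨⟨h1, h2⟩, h3, h4⟩ <;> refine ⟨⟨?_, ?_⟩, ?_, ?_⟩ <;> linarith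

theorem nb_zero (p u : ℤ × ℤ) : nb p u 0 0 = p := by
  simp [nb]

/-- the arc parametrizing the three edges -/
def gx (s : ℝ) : ℝ := min (min s (3 - s)) 1 - 1 / 2
def gy (s : ℝ) : ℝ := max (-1 / 2) (min (1 / 2) (s - 3 / 2))

theorem simple_interval {S : Set (ℤ × ℤ)} {p u : ℤ × ℤ} (hs : Simple S p u) :
    ∃ a b : ℕ, a ≤ b ∧ b ≤ 3 ∧ (∀ k < 7, ring p u k ∈ S → a ≤ k / 2 ∧ (k + 1) / 2 ≤ b) ∧
      (∀ j, a ≤ j → j < b → ring p u (2 * j + 1) ∈ S) ∧ (a = b → ring p u (2 * a) ∈ S) := by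
  obtain ⟨-, ⟨k0, hk0, hk0S⟩, hgap⟩ := hs
  have hfin : {k : ℕ | k < 7 ∧ ring p u k ∈ S}.Finite :=
    (Set.finite_lt_nat 7).subset (fun k hk => hk.1)
  obtain ⟨i, ⟨hi7, hiS⟩, hi⟩ := Set.exists_min_image _ (fun k => k) hfin ⟨k0, hk0, hk0S⟩
  obtain ⟨j, ⟨hj7, hjS⟩, hj⟩ := Set.exists_max_image _ (fun k => k) hfin ⟨k0, hk0, hk0S⟩
  have hij : i ≤ j := hi j ⟨hj7, hjS⟩
  refine ⟨i / 2, (j + 1) / 2, by omega, by omega, ?_, ?_, ?_⟩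
  · intro k hk hkS
    have h1 := hi k ⟨hk, hkS⟩
    have h2 := hj k ⟨hk, hkS⟩
    omega
  · intro l h1 h2
    by_cases e1 : i = 2 * l + 1
    · rw [← e1]; exact hiS
    by_cases e2 : j = 2 * l + 1
    · rw [← e2]; exact hjS
    exact hgap i (2 * l + 1) j (by omega) (by omega) hj7 (by omega) hiS hjS
  · intro h
    have : 2 * (i / 2) = i := by omega
    rw [this]; exact hiS

/-- Removing a simple pixel is a homotopy equivalence. -/
theorem simple_homotopyEquiv {S : Set (ℤ × ℤ)} (hS : S.Finite) {p u : ℤ × ℤ} (hp : p ∈ S)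
    (hu : Dir u) (hs : Simple S p u) :
    Nonempty (ContinuousMap.HomotopyEquiv ↥(rl S) ↥(rl (S \ {p}))) := by
  classical
  obtain ⟨a, b, hab, hb3, hin, hed, hve⟩ := simple_interval hs
  set c : Plane → ℝ := fun z =>
    max (a : ℝ) (min (b : ℝ) (3 / 2 + fy p u z * (2 - 2 * fx p u z))) with hc
  set r : Plane → Plane := fun z => mk p u (gx (c z)) (gy (c z)) with hr
  have habR : (a : ℝ) ≤ b := by exact_mod_cast hab
  have hb3R : (b : ℝ) ≤ 3 := by exact_mod_cast hb3
  have ha0R : (0 : ℝ) ≤ a := by positivity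
  have hca : ∀ z, (a : ℝ) ≤ c z := fun z => le_max_left _ _
  have hcb : ∀ z, c z ≤ b := fun z => max_le habR (min_le_left _ _)
  have hrcont : Continuous r := by
    have h0 : Continuous fun z : Plane => z 0 := continuous_apply 0
    have h1 : Continuous fun z : Plane => z 1 := continuous_apply 1
    have hfx : Continuous (fx p u) := by unfold fx; fun_prop
    have hfy : Continuous (fy p u) := by unfold fy; fun_prop
    have hcc : Continuous c := by simp only [hc]; fun_prop
    have hgx : Continuous fun z => gx (c z) := by unfold gx; fun_prop
    have hgy : Continuous fun z => gy (c z) := by unfold gy; fun_prop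
    refine continuous_pi fun i => ?_
    fin_cases i <;> simp [hr, mk] <;> fun_prop
  -- position of arc points
  have edge1 : ∀ s : ℝ, 0 ≤ s → s ≤ 1 → gx s = s - 1 / 2 ∧ gy s = -1 / 2 := by
    intro s h0 h1
    unfold gx gy
    rw [min_eq_left (a := s) (b := 3 - s) (by linarith), min_eq_left h1,
      min_eq_right (by linarith), max_eq_left (by linarith)]
    exact ⟨rfl, rfl⟩
  have edge2 : ∀ s : ℝ, 1 ≤ s → s ≤ 2 → gx s = 1 / 2 ∧ gy s = s - 3 / 2 := by
    intro s h0 h1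
    unfold gx gy
    rw [min_eq_right (a := min s (3 - s)) (le_min h0 (by linarith)),
      min_eq_right (by linarith), max_eq_right (by linarith)]
    norm_num
  have edge3 : ∀ s : ℝ, 2 ≤ s → s ≤ 3 → gx s = 5 / 2 - s ∧ gy s = 1 / 2 := by
    intro s h0 h1
    unfold gx gy
    rw [min_eq_right (a := s) (b := 3 - s) (by linarith), min_eq_left (a := 3 - s) (by linarith),
      min_eq_left (by linarith), max_eq_right (by linarith)]
    constructor <;> ring
  have hmk : ∀ (x y : ℝ) (α β : ℤ), α - 1 / 2 ≤ x → x ≤ α + 1 / 2 → β - 1 / 2 ≤ y →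
      y ≤ β + 1 / 2 → mk p u x y ∈ sq (nb p u α β) := by
    intro x y α β h1 h2 h3 h4
    rw [mem_sq_nb p u hu, fx_mk p u hu, fy_mk p u hu]
    exact ⟨⟨h1, h2⟩, h3, h4⟩
  have hrp : ∀ z, r z ∈ sq p := by
    intro z
    have h1 := hca z
    have h2 := hcb z
    have : r z ∈ sq (nb p u 0 0) := by
      rcases le_total (c z) 1 with h | h
      · obtain ⟨e1, e2⟩ := edge1 (c z) (by linarith) h
        apply hmk <;> simp only [e1, e2] <;> push_cast <;> linarith
      rcases le_total (c z) 2 with h' | h'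
      · obtain ⟨e1, e2⟩ := edge2 (c z) h h'
        apply hmk <;> simp only [e1, e2] <;> push_cast <;> linarith
      · obtain ⟨e1, e2⟩ := edge3 (c z) h' (by linarith)
        apply hmk <;> simp only [e1, e2] <;> push_cast <;> linarith
    rwa [nb_zero] at this
  have hedge : ∀ j : ℕ, j < 3 → ∀ s : ℝ, (j : ℝ) ≤ s → s ≤ j + 1 →
      mk p u (gx s) (gy s) ∈ sq (ring p u (2 * j + 1)) := by
    intro j hj s h1 h2
    interval_cases j
    · obtain ⟨e1, e2⟩ := edge1 s (by simpa using h1) (by simpa using h2)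
      apply hmk <;> simp only [e1, e2, rc] <;> push_cast at * <;> linarith
    · obtain ⟨e1, e2⟩ := edge2 s (by simpa using h1) (by push_cast at h2; linarith)
      apply hmk <;> simp only [e1, e2, rc] <;> push_cast at * <;> linarith
    · obtain ⟨e1, e2⟩ := edge3 s (by simpa using h1) (by push_cast at h2; linarith)
      apply hmk <;> simp only [e1, e2, rc] <;> push_cast at * <;> linarith
  have hvert : ∀ j : ℕ, j ≤ 3 → mk p u (gx j) (gy j) ∈ sq (ring p u (2 * j)) := by
    intro j hj
    interval_cases j
    · obtain ⟨e1, e2⟩ := edge1 0 (by norm_num) (by norm_num)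
      apply hmk <;> simp only [e1, e2, rc, Nat.cast_zero] <;> norm_num
    · obtain ⟨e1, e2⟩ := edge1 1 (by norm_num) (by norm_num)
      apply hmk <;> simp only [e1, e2, rc, Nat.cast_one] <;> norm_num
    · obtain ⟨e1, e2⟩ := edge2 2 (by norm_num) (by norm_num)
      apply hmk <;> simp only [e1, e2, rc, Nat.cast_ofNat] <;> norm_num
    · obtain ⟨e1, e2⟩ := edge3 3 (by norm_num) (by norm_num)
      apply hmk <;> simp only [e1, e2, rc, Nat.cast_ofNat] <;> norm_num
  have hrS : ∀ z, r z ∈ rl (S \ {p}) := by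
    intro z
    have h1 := hca z
    have h2 := hcb z
    rcases hab.eq_or_lt with h | h
    · subst h
      have hcz : c z = a := le_antisymm h2 h1
      refine ⟨_, ⟨hve rfl, ring_ne p u hu _⟩, ?_⟩
      simp only [hr, hcz]
      exact hvert a hb3
    · obtain ⟨j, hj1, hj2, h3, h4⟩ : ∃ j : ℕ, a ≤ j ∧ j < b ∧ (j : ℝ) ≤ c z ∧ c z ≤ j + 1 := by
        rcases eq_or_lt_of_le h2 with h5 | h5
        · refine ⟨b - 1, by omega, by omega, ?_, ?_⟩
          · rw [h5]; exact_mod_cast Nat.sub_le b 1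
          · rw [h5]
            have : b ≤ (b - 1) + 1 := by omega
            exact_mod_cast this
        · have h6 : 0 ≤ c z := ha0R.trans h1
          refine ⟨⌊c z⌋₊, Nat.le_floor h1, (Nat.floor_lt h6).2 h5, Nat.floor_le h6,
            (Nat.lt_floor_add_one _).le⟩
      exact ⟨_, ⟨hed j hj1 hj2, ring_ne p u hu _⟩, hedge j (by omega) _ h3 h4⟩
  have hfix : ∀ z ∈ sq p, z ∈ rl (S \ {p}) → r z = z := by
    intro z hz hzS
    obtain ⟨q, hq, hzq⟩ := hzS
    have hA8 : A8 p q := by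
      obtain ⟨⟨z1, z2⟩, z3, z4⟩ := hz
      obtain ⟨⟨y1, y2⟩, y3, y4⟩ := hzq
      have l1 : (p.1 : ℝ) ≤ q.1 + 1 := by linarith
      have l2 : (q.1 : ℝ) ≤ p.1 + 1 := by linarith
      have l3 : (p.2 : ℝ) ≤ q.2 + 1 := by linarith
      have l4 : (q.2 : ℝ) ≤ p.2 + 1 := by linarith
      exact ⟨by exact_mod_cast l1, by exact_mod_cast l2, by exact_mod_cast l3,
        by exact_mod_cast l4⟩
    obtain ⟨k, hk, rfl⟩ := exists_ring_of_a8 p u q hu hA8 hq.2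
    have hk7 : k < 7 := by
      rcases hk.eq_or_lt with rfl | h
      · exact (hs.1 hq.1).elim
      · exact h
    obtain ⟨i1, i2⟩ := hin k hk7 hq.1
    have i1R : (a : ℝ) ≤ ((k / 2 : ℕ) : ℝ) := by exact_mod_cast i1
    have i2R : (((k + 1) / 2 : ℕ) : ℝ) ≤ b := by exact_mod_cast i2
    have hz0 : z ∈ sq (nb p u 0 0) := by rwa [nb_zero]
    rw [mem_sq_nb p u hu] at hz0
    unfold ring at hzq
    rw [mem_sq_nb p u hu] at hzq
    have hz' := mk_fx_fy p u hu z
    have hcz : c z = max (a : ℝ) (min (b : ℝ) (3 / 2 + fy p u z * (2 - 2 * fx p u z))) := rfl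
    have hrz : r z = mk p u (gx (c z)) (gy (c z)) := rfl
    rw [hrz]
    clear hrz hr hc hrS hrp hrcont hvert hedge hmk
    generalize hX : fx p u z = x at *
    generalize hY : fy p u z = y at *
    obtain ⟨⟨q1, q2⟩, q3, q4⟩ := hz0
    obtain ⟨⟨w1, w2⟩, w3, w4⟩ := hzq
    refine Eq.trans ?_ hz'
    have fin : ∀ s : ℝ, s = 3 / 2 + y * (2 - 2 * x) → (a : ℝ) ≤ s → s ≤ b →
        gx s = x → gy s = y → mk p u (gx (c z)) (gy (c z)) = mk p u x y := by
      intro s e1 e2 e3 e4 e5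
      have : c z = s := by rw [hcz, ← e1, min_eq_right e3, max_eq_right e2]
      rw [this, e4, e5]
    interval_cases k <;> simp only [rc] at w1 w2 w3 w4 <;> push_cast at w1 w2 w3 w4 q1 q2 q3 q4 <;>
      simp only [Nat.reduceDiv, Nat.reduceAdd, Nat.cast_zero, Nat.cast_one, Nat.cast_ofNat] at i1R i2R
    · have hx : x = -1/2 := by linarith
      have hy : y = -1/2 := by linarith
      obtain ⟨e1, e2⟩ := edge1 0 (by norm_num) (by norm_num)
      exact fin 0 (by rw [hx, hy]; norm_num) (by linarith) (by linarith) (by rw [e1, hx]; norm_num)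
        (by rw [e2, hy])
    · have hy : y = -1/2 := by linarith
      obtain ⟨e1, e2⟩ := edge1 (x + 1/2) (by linarith) (by linarith)
      exact fin (x + 1/2) (by rw [hy]; ring) (by linarith) (by linarith) (by rw [e1]; ring)
        (by rw [e2, hy])
    · have hx : x = 1/2 := by linarith
      have hy : y = -1/2 := by linarith
      obtain ⟨e1, e2⟩ := edge1 1 (by norm_num) (by norm_num)
      exact fin 1 (by rw [hx, hy]; norm_num) (by linarith) (by linarith) (by rw [e1, hx]; norm_num)
        (by rw [e2, hy])
    · have hx : x = 1/2 := by linarith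
      obtain ⟨e1, e2⟩ := edge2 (y + 3/2) (by linarith) (by linarith)
      exact fin (y + 3/2) (by rw [hx]; ring) (by linarith) (by linarith) (by rw [e1, hx])
        (by rw [e2]; ring)
    · have hx : x = 1/2 := by linarith
      have hy : y = 1/2 := by linarith
      obtain ⟨e1, e2⟩ := edge2 2 (by norm_num) (by norm_num)
      exact fin 2 (by rw [hx, hy]; norm_num) (by linarith) (by linarith) (by rw [e1, hx])
        (by rw [e2, hy]; norm_num)
    · have hy : y = 1/2 := by linarith
      obtain ⟨e1, e2⟩ := edge3 (5/2 - x) (by linarith) (by linarith)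
      exact fin (5/2 - x) (by rw [hy]; ring) (by linarith) (by linarith) (by rw [e1]; ring)
        (by rw [e2, hy])
    · have hx : x = -1/2 := by linarith
      have hy : y = 1/2 := by linarith
      obtain ⟨e1, e2⟩ := edge3 3 (by norm_num) (by norm_num)
      exact fin 3 (by rw [hx, hy]; norm_num) (by linarith) (by linarith) (by rw [e1, hx]; norm_num)
        (by rw [e2, hy])
  have hun : rl S = sq p ∪ rl (S \ {p}) := by
    ext z
    constructor
    · rintro ⟨q, hq, hz⟩
      by_cases h : q = p
      · subst h; exact Or.inl hz
      · exact Or.inr ⟨q, ⟨hq, h⟩, hz⟩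
    · rintro (h | ⟨q, hq, hz⟩)
      · exact ⟨p, hp, h⟩
      · exact ⟨q, hq.1, hz⟩
  set f : Plane → Plane := fun z => if z ∈ sq p then r z else z with hf
  have hf1 : ∀ z ∈ sq p, f z = r z := fun z hz => if_pos hz
  have hf2 : ∀ z ∈ rl (S \ {p}), f z = z := by
    intro z hz
    by_cases h : z ∈ sq p
    · rw [hf1 z h, hfix z h hz]
    · exact if_neg h
  refine homotopyEquiv_of_segments f id ?_ continuousOn_id ?_ ?_ ?_ ?_
  · rw [hun]
    refine ContinuousOn.union_of_isClosed (hrcont.continuousOn.congr hf1)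
      (continuousOn_id.congr hf2) (isClosed_sq p) (isClosed_rl (hS.subset sdiff_subset))
  · intro z hz
    rw [hun] at hz
    rcases hz with h | h
    · rw [hf1 z h]; exact hrS z
    · rw [hf2 z h]; exact h
  · intro z hz
    rw [hun]; exact Or.inr hz
  · intro z hz
    simp only [id]
    rw [hun] at hz
    rcases hz with h | h
    · rw [hf1 z h, hun]
      exact (convex_sq p).segment_subset h (hrp z) |>.trans subset_union_left
    · rw [hf2 z h, segment_same, hun]
      rintro _ rfl
      exact Or.inr h
  · intro z hz
    simp only [id]
    rw [hf2 z hz, segment_same]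
    rintro _ rfl
    exact hz

theorem good_homotopyEquiv (n : ℕ) : ∀ {Q X : Set (ℤ × ℤ)}, Good Q X → X.Finite →
    X.ncard ≤ n → Nonempty (ContinuousMap.HomotopyEquiv ↥(rl X) ↥(rl Q)) := by
  induction n with
  | zero =>
    intro Q X hg hX hn
    have hX0 : X = ∅ := by
      rw [← Set.ncard_eq_zero hX]; omega
    have hQ0 : Q = ∅ := Set.subset_empty_iff.1 (hX0 ▸ hg.sub)
    rw [hX0, hQ0]
    exact ⟨ContinuousMap.HomotopyEquiv.refl _⟩
  | succ n ih =>
    intro Q X hg hX hn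
    by_cases hne : X = Q
    · rw [hne]
      exact ⟨ContinuousMap.HomotopyEquiv.refl _⟩
    obtain ⟨p, hp, hpQ, u, hu, hs⟩ := exists_simple hg hX hne
    obtain ⟨e1⟩ := simple_homotopyEquiv hX hp hu hs
    obtain ⟨e2⟩ := ih (hg.erase hpQ hu hs) (hX.subset sdiff_subset) (by
      have := Set.ncard_sdiff_singleton_lt_of_mem hp hX
      omega)
    exact ⟨e1.trans e2⟩

/-- refinement of a binary image to the fine grid -/
def fine (a b : ℤ) (S : Set (ℕ × ℕ)) : Set (ℤ × ℤ) :=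
  {q | ∃ p ∈ S, (4 * (p.1 : ℤ) - a ≤ q.1 ∧ q.1 ≤ 4 * p.1 + b) ∧
    (4 * (p.2 : ℤ) - a ≤ q.2 ∧ q.2 ≤ 4 * p.2 + b)}

theorem exists_int_between (x : ℝ) (l r : ℤ) (hlr : l ≤ r) (h1 : (l : ℝ) ≤ x) (h2 : x ≤ r + 1) :
    ∃ m : ℤ, l ≤ m ∧ m ≤ r ∧ (m : ℝ) ≤ x ∧ x ≤ m + 1 := by
  by_cases h : x ≤ r
  · by_cases h' : x < r
    · exact ⟨⌊x⌋, Int.le_floor.2 h1, (Int.floor_lt.2 h').le, Int.floor_le x,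
        (Int.lt_floor_add_one x).le⟩
    · exact ⟨r, hlr, le_rfl, by linarith, by linarith⟩
  · exact ⟨r, hlr, le_rfl, by linarith, by linarith⟩

theorem mem_rl_fine {a b : ℤ} (hab : 0 ≤ a + b) (S : Set (ℕ × ℕ)) (z : Plane) :
    z ∈ rl (fine a b S) ↔ ∃ p ∈ S, (4 * (p.1 : ℝ) - a ≤ z 0 ∧ z 0 ≤ 4 * p.1 + b + 1) ∧
      (4 * (p.2 : ℝ) - a ≤ z 1 ∧ z 1 ≤ 4 * p.2 + b + 1) := by
  constructor
  · rintro ⟨q, ⟨p, hp, ⟨h1, h2⟩, h3, h4⟩, ⟨h5, h6⟩, h7, h8⟩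
    have h1' : (4 * (p.1 : ℝ) - a) ≤ q.1 := by exact_mod_cast h1
    have h2' : (q.1 : ℝ) ≤ 4 * (p.1 : ℝ) + b := by exact_mod_cast h2
    have h3' : (4 * (p.2 : ℝ) - a) ≤ q.2 := by exact_mod_cast h3
    have h4' : (q.2 : ℝ) ≤ 4 * (p.2 : ℝ) + b := by exact_mod_cast h4
    exact ⟨p, hp, ⟨by linarith, by linarith⟩, by linarith, by linarith⟩
  · rintro ⟨p, hp, ⟨h1, h2⟩, h3, h4⟩
    obtain ⟨m, m1, m2, m3, m4⟩ := exists_int_between (z 0) (4 * (p.1 : ℤ) - a) (4 * p.1 + b)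
      (by omega) (by push_cast; linarith) (by push_cast; linarith)
    obtain ⟨n, n1, n2, n3, n4⟩ := exists_int_between (z 1) (4 * (p.2 : ℤ) - a) (4 * p.2 + b)
      (by omega) (by push_cast; linarith) (by push_cast; linarith)
    exact ⟨(m, n), ⟨p, hp, ⟨m1, m2⟩, n1, n2⟩, ⟨m3, m4⟩, n3, n4⟩

def clamp (t : ℝ) : ℝ := max 0 (min 1 t)

theorem clamp_nonneg (t : ℝ) : 0 ≤ clamp t := le_max_left _ _

theorem clamp_le (t : ℝ) : clamp t ≤ 1 := max_le zero_le_one (min_le_left _ _)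

theorem clamp_one {t : ℝ} (h : 1 ≤ t) : clamp t = 1 := by
  unfold clamp; rw [min_eq_left h, max_eq_right zero_le_one]

theorem clamp_zero {t : ℝ} (h : t ≤ 0) : clamp t = 0 := by
  unfold clamp; exact max_eq_left ((min_le_right _ _).trans h)

/-- staircase -/
def stair (N : ℕ) (w : ℝ) : ℝ := ∑ k ∈ Finset.range N, clamp (4 * (w - k - 3 / 8))

theorem continuous_stair (N : ℕ) : Continuous (stair N) := by
  unfold stair clamp
  fun_prop

theorem stair_mem {N i : ℕ} (h1 : 1 ≤ i) (hN : i ≤ N) {w : ℝ} (hw1 : (i : ℝ) - 11 / 8 ≤ w)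
    (hw2 : w ≤ i + 3 / 8) : (i : ℝ) - 1 ≤ stair N w ∧ stair N w ≤ i := by
  constructor
  · calc (i : ℝ) - 1 = ∑ k ∈ Finset.range (i - 1), (1 : ℝ) := by
          rw [Finset.sum_const, Finset.card_range, nsmul_eq_mul, mul_one]
          rw [Nat.cast_sub h1, Nat.cast_one]
      _ ≤ ∑ k ∈ Finset.range (i - 1), clamp (4 * (w - k - 3 / 8)) := by
          refine Finset.sum_le_sum fun k hk => ?_
          rw [Finset.mem_range] at hk
          have : (k : ℝ) + 2 ≤ i := by exact_mod_cast (by omega : k + 2 ≤ i)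
          rw [clamp_one (by linarith)]
      _ ≤ stair N w := by
          refine Finset.sum_le_sum_of_subset_of_nonneg ?_ (fun k _ _ => clamp_nonneg _)
          intro k; simp only [Finset.mem_range]; omega
  · have : stair N w = ∑ k ∈ Finset.range i, clamp (4 * (w - k - 3 / 8)) := by
      symm
      refine Finset.sum_subset ?_ ?_
      · intro k; simp only [Finset.mem_range]; omega
      · intro k _ hk
        have : (i : ℝ) ≤ k := by exact_mod_cast (not_lt.1 (fun h => hk (Finset.mem_range.2 h)))
        exact clamp_zero (by linarith)
    rw [this]
    calc ∑ k ∈ Finset.range i, clamp (4 * (w - k - 3 / 8)) ≤ ∑ k ∈ Finset.range i, (1 : ℝ) :=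
          Finset.sum_le_sum fun k _ => clamp_le _
      _ = i := by simp

theorem convex_box (l r l' r' : ℝ) :
    Convex ℝ {z : Plane | (l ≤ z 0 ∧ z 0 ≤ r) ∧ (l' ≤ z 1 ∧ z 1 ≤ r')} := by
  intro x hx y hy a b ha hb hab
  obtain ⟨⟨x1, x2⟩, x3, x4⟩ := hx
  obtain ⟨⟨y1, y2⟩, y3, y4⟩ := hy
  have hb' : b = 1 - a := by linarith
  subst hb'
  refine ⟨⟨?_, ?_⟩, ?_, ?_⟩ <;> simp only [Pi.add_apply, Pi.smul_apply, smul_eq_mul] <;>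
    nlinarith

theorem fg_homotopyEquiv_fine {S : Set (ℕ × ℕ)} {h w : ℕ} (hS : OnGrid S h w) {a b : ℤ}
    (ha : 3 ≤ a) (ha' : a ≤ 4) (hb : 1 ≤ b) (hb' : b ≤ 2) :
    Nonempty (ContinuousMap.HomotopyEquiv ↥(fg S) ↥(rl (fine a b S))) := by
  have a1 : (3 : ℝ) ≤ a := by exact_mod_cast ha
  have a2 : (a : ℝ) ≤ 4 := by exact_mod_cast ha'
  have b1 : (1 : ℝ) ≤ b := by exact_mod_cast hb
  have b2 : (b : ℝ) ≤ 2 := by exact_mod_cast hb'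
  have hab : 0 ≤ a + b := by omega
  set f : Plane → Plane := fun z => ![4 * z 0 + 3 / 2, 4 * z 1 + 3 / 2] with hf
  set g : Plane → Plane := fun z =>
    ![stair (max h w) ((z 0 - 3 / 2) / 4), stair (max h w) ((z 1 - 3 / 2) / 4)] with hg
  set bx : ℕ × ℕ → Set Plane := fun p =>
    {z | (4 * (p.1 : ℝ) - a ≤ z 0 ∧ z 0 ≤ 4 * p.1 + b + 1) ∧
      (4 * (p.2 : ℝ) - a ≤ z 1 ∧ z 1 ≤ 4 * p.2 + b + 1)} with hbx
  have hfp : ∀ p, ∀ z ∈ pixel p, f z ∈ bx p := by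
    rintro p z ⟨⟨h1, h2⟩, h3, h4⟩
    refine ⟨⟨?_, ?_⟩, ?_, ?_⟩ <;> simp [hf] <;> linarith
  have hgp : ∀ p ∈ S, ∀ z ∈ bx p, g z ∈ pixel p := by
    rintro p hp z ⟨⟨h1, h2⟩, h3, h4⟩
    obtain ⟨⟨g1, g2⟩, g3, g4⟩ := hS hp
    have e1 := stair_mem (N := max h w) (w := (z 0 - 3 / 2) / 4) g1 (le_max_of_le_left g2)
      (by linarith) (by linarith)
    have e2 := stair_mem (N := max h w) (w := (z 1 - 3 / 2) / 4) g3 (le_max_of_le_right g4)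
      (by linarith) (by linarith)
    exact ⟨e1, e2⟩
  have hbr : ∀ p ∈ S, bx p ⊆ rl (fine a b S) := fun p hp z hz =>
    (mem_rl_fine hab S z).2 ⟨p, hp, hz⟩
  have hpr : ∀ p ∈ S, pixel p ⊆ fg S := fun p hp => subset_biUnion_of_mem hp
  have hfg : ∀ z ∈ fg S, ∃ p ∈ S, z ∈ pixel p := fun z hz => by simpa [fg] using hz
  have hrl : ∀ z ∈ rl (fine a b S), ∃ p ∈ S, z ∈ bx p := fun z hz => (mem_rl_fine hab S z).1 hz
  refine homotopyEquiv_of_segments f g ?_ ?_ ?_ ?_ ?_ ?_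
  · refine Continuous.continuousOn (continuous_pi fun i => ?_)
    fin_cases i <;> simp [hf] <;> fun_prop
  · have h0 : Continuous fun z : Plane => stair (max h w) ((z 0 - 3 / 2) / 4) :=
      (continuous_stair _).comp (by fun_prop)
    have h1 : Continuous fun z : Plane => stair (max h w) ((z 1 - 3 / 2) / 4) :=
      (continuous_stair _).comp (by fun_prop)
    refine Continuous.continuousOn (continuous_pi fun i => ?_)
    fin_cases i
    · exact h0
    · exact h1
  · intro z hz
    obtain ⟨p, hp, hzp⟩ := hfg z hz
    exact hbr p hp (hfp p z hzp)
  · intro z hz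
    obtain ⟨p, hp, hzp⟩ := hrl z hz
    exact hpr p hp (hgp p hp z hzp)
  · intro z hz
    obtain ⟨p, hp, hzp⟩ := hfg z hz
    exact ((convex_box _ _ _ _).segment_subset hzp (hgp p hp _ (hfp p z hzp))).trans (hpr p hp)
  · intro z hz
    obtain ⟨p, hp, hzp⟩ := hrl z hz
    exact ((convex_box _ _ _ _).segment_subset hzp (hfp p _ (hgp p hp z hzp))).trans (hbr p hp)

theorem fine_finite {S : Set (ℕ × ℕ)} {h w : ℕ} (hS : OnGrid S h w) (a b : ℤ) :
    (fine a b S).Finite := by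
  have : fine a b S ⊆ ⋃ p ∈ (Set.Icc 1 h ×ˢ Set.Icc 1 w : Set (ℕ × ℕ)),
      Set.Icc (4 * (p.1 : ℤ) - a) (4 * p.1 + b) ×ˢ Set.Icc (4 * (p.2 : ℤ) - a) (4 * p.2 + b) := by
    rintro q ⟨p, hp, h1, h2⟩
    simp only [mem_iUnion]
    exact ⟨p, hS hp, h1, h2⟩
  refine Set.Finite.subset (Set.Finite.biUnion ?_ ?_) this
  · exact (Set.finite_Icc _ _).prod (Set.finite_Icc _ _)
  · intro p _
    exact (Set.finite_Icc _ _).prod (Set.finite_Icc _ _)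

/-- closed cell of the fine grid with breakpoints `b` -/
def cell (b : ℤ → ℝ) (q : ℤ × ℤ) : Set Plane :=
  {z | (b q.1 ≤ z 0 ∧ z 0 ≤ b (q.1 + 1)) ∧ (b q.2 ≤ z 1 ∧ z 1 ≤ b (q.2 + 1))}

/-- open cell of the fine grid -/
def ocell (b : ℤ → ℝ) (q : ℤ × ℤ) : Set Plane :=
  {z | (b q.1 < z 0 ∧ z 0 < b (q.1 + 1)) ∧ (b q.2 < z 1 ∧ z 1 < b (q.2 + 1))}

/-- union of closed cells -/
def cl (b : ℤ → ℝ) (L : Set (ℤ × ℤ)) : Set Plane := {z | ∃ q ∈ L, z ∈ cell b q}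

/-- admissible breakpoints -/
structure Brk (b : ℤ → ℝ) : Prop where
  mono : StrictMono b
  cov : ∀ x, ∃ m, b m ≤ x ∧ x < b (m + 1)

theorem Brk.nhds1 {b : ℤ → ℝ} (hb : Brk b) (x : ℝ) :
    ∃ l r : ℝ, l < x ∧ x < r ∧ ∀ y, l < y → y < r → ∀ k, b k ≤ y → y ≤ b (k + 1) →
      b k ≤ x ∧ x ≤ b (k + 1) := by
  obtain ⟨m, h1, h2⟩ := hb.cov x
  rcases h1.eq_or_lt with h | h
  · refine ⟨b (m - 1), b (m + 1), ?_, h2, ?_⟩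
    · rw [← h]; exact hb.mono (by omega)
    · intro y y1 y2 k k1 k2
      have a1 : m - 1 < k + 1 := hb.mono.lt_iff_lt.1 (y1.trans_le k2)
      have a2 : k < m + 1 := hb.mono.lt_iff_lt.1 (k1.trans_lt y2)
      rw [← h]
      exact ⟨hb.mono.monotone (by omega), hb.mono.monotone (by omega)⟩
  · refine ⟨b m, b (m + 1), h, h2, ?_⟩
    intro y y1 y2 k k1 k2
    have a1 : m < k + 1 := hb.mono.lt_iff_lt.1 (y1.trans_le k2)
    have a2 : k < m + 1 := hb.mono.lt_iff_lt.1 (k1.trans_lt y2)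
    have : k = m := by omega
    subst this
    exact ⟨h1, h2.le⟩

theorem isOpen_obox (l r l' r' : ℝ) :
    IsOpen {z : Plane | (l < z 0 ∧ z 0 < r) ∧ (l' < z 1 ∧ z 1 < r')} := by
  have h0 : Continuous fun z : Plane => z 0 := continuous_apply 0
  have h1 : Continuous fun z : Plane => z 1 := continuous_apply 1
  exact ((isOpen_lt continuous_const h0).inter (isOpen_lt h0 continuous_const)).inter
    ((isOpen_lt continuous_const h1).inter (isOpen_lt h1 continuous_const))

theorem convex_obox (l r l' r' : ℝ) :
    Convex ℝ {z : Plane | (l < z 0 ∧ z 0 < r) ∧ (l' < z 1 ∧ z 1 < r')} := by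
  have key : ∀ c d : ℝ, Convex ℝ {z : Plane | (c < z 0 ∧ z 0 < d)} ∧
      Convex ℝ {z : Plane | (c < z 1 ∧ z 1 < d)} := by
    intro c d
    exact ⟨(convex_Ioo c d).is_linear_preimage (f := fun z : Plane => z 0)
        ⟨fun _ _ => rfl, fun _ _ => rfl⟩,
      (convex_Ioo c d).is_linear_preimage (f := fun z : Plane => z 1)
        ⟨fun _ _ => rfl, fun _ _ => rfl⟩⟩
  exact (key l r).1.inter (key l' r').2

theorem isClosed_cl {b : ℤ → ℝ} (hb : Brk b) (L : Set (ℤ × ℤ)) : IsClosed (cl b L) := by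
  rw [← isOpen_compl_iff, isOpen_iff_mem_nhds]
  intro z hz
  obtain ⟨l, r, h1, h2, h3⟩ := hb.nhds1 (z 0)
  obtain ⟨l', r', h1', h2', h3'⟩ := hb.nhds1 (z 1)
  refine Filter.mem_of_superset ((isOpen_obox l r l' r').mem_nhds ⟨⟨h1, h2⟩, h1', h2'⟩) ?_
  rintro y ⟨⟨y1, y2⟩, y3, y4⟩ ⟨q, hq, ⟨⟨q1, q2⟩, q3, q4⟩⟩
  exact hz ⟨q, hq, h3 _ y1 y2 _ q1 q2, h3' _ y3 y4 _ q3 q4⟩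

/-- no diagonal configuration -/
def NoCheck (L : Set (ℤ × ℤ)) : Prop := ∀ m n : ℤ,
  ((m, n) ∈ L → (m + 1, n + 1) ∈ L → (m + 1, n) ∈ L ∨ (m, n + 1) ∈ L) ∧
  ((m + 1, n) ∈ L → (m, n + 1) ∈ L → (m, n) ∈ L ∨ (m + 1, n + 1) ∈ L)

theorem NoCheck.conn {L : Set (ℤ × ℤ)} (hL : NoCheck L) {p q : ℤ × ℤ} (hp : p ∈ L) (hq : q ∈ L)
    (h : A8 p q) : Cn A4 L p q := by
  obtain ⟨m, n⟩ := p
  obtain ⟨m', n'⟩ := q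
  have two : ∀ r : ℤ × ℤ, r ∈ L → A4 (m, n) r → A4 r (m', n') → Cn A4 L (m, n) (m', n') :=
    fun r hr h1 h2 => (Cn.single hp hr h1).trans (Cn.single hr hq h2)
  obtain ⟨h1, h2, h3, h4⟩ := h
  simp only at h1 h2 h3 h4
  by_cases e : m = m'
  · subst e
    by_cases e' : n = n'
    · subst e'; exact Cn.refl _
    · have : n' = n + 1 ∨ n = n' + 1 := by omega
      exact Cn.single hp hq (Or.inl ⟨rfl, this⟩)
  by_cases e' : n = n'
  · exact Cn.single hp hq (by unfold A4; simp only; omega)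
  rcases (by omega : m' = m + 1 ∨ m = m' + 1) with rfl | rfl <;>
    rcases (by omega : n' = n + 1 ∨ n = n' + 1) with rfl | rfl
  · rcases (hL m n).1 hp hq with h | h
    · exact two _ h (by unfold A4; simp) (by unfold A4; simp)
    · exact two _ h (by unfold A4; simp) (by unfold A4; simp)
  · rcases (hL m n').2 hq hp with h | h
    · exact two _ h (by unfold A4; simp) (by unfold A4; simp)
    · exact two _ h (by unfold A4; simp) (by unfold A4; simp)
  · rcases (hL m' n).2 hp hq with h | h
    · exact two _ h (by unfold A4; simp) (by unfold A4; simp)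
    · exact two _ h (by unfold A4; simp) (by unfold A4; simp)
  · rcases (hL m' n').1 hq hp with h | h
    · exact two _ h (by unfold A4; simp) (by unfold A4; simp)
    · exact two _ h (by unfold A4; simp) (by unfold A4; simp)

theorem a8_of_cell {b : ℤ → ℝ} (hb : Brk b) {p q : ℤ × ℤ} {z : Plane} (hp : z ∈ cell b p)
    (hq : z ∈ cell b q) : A8 p q := by
  obtain ⟨⟨p1, p2⟩, p3, p4⟩ := hp
  obtain ⟨⟨q1, q2⟩, q3, q4⟩ := hq
  exact ⟨hb.mono.le_iff_le.1 (p1.trans q2), hb.mono.le_iff_le.1 (q1.trans p2),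
    hb.mono.le_iff_le.1 (p3.trans q4), hb.mono.le_iff_le.1 (q3.trans p4)⟩

/-- a preconnected subset of `cl L` only meets connected cells -/
theorem conn_of_preconnected {b : ℤ → ℝ} (hb : Brk b) {L : Set (ℤ × ℤ)} (hL : NoCheck L)
    {S : Set Plane} (hS : IsPreconnected S) (hSL : S ⊆ cl b L) {p q : ℤ × ℤ} (hp : p ∈ L)
    (hq : q ∈ L) {y z : Plane} (hy : y ∈ S) (hyp : y ∈ cell b p) (hz : z ∈ S)
    (hzq : z ∈ cell b q) : Cn A4 L p q := by
  by_contra hcon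
  obtain ⟨w, hw, ⟨r, ⟨hr, hr'⟩, hwr⟩, s, ⟨hs, hs'⟩, hws⟩ := isPreconnected_closed_iff.1 hS
    (cl b {r | r ∈ L ∧ Cn A4 L p r}) (cl b {r | r ∈ L ∧ ¬ Cn A4 L p r})
    (isClosed_cl hb _) (isClosed_cl hb _) (by
      intro w hw
      obtain ⟨r, hr, hwr⟩ := hSL hw
      by_cases h : Cn A4 L p r
      · exact Or.inl ⟨r, ⟨hr, h⟩, hwr⟩
      · exact Or.inr ⟨r, ⟨hr, h⟩, hwr⟩)
    ⟨y, hy, p, ⟨hp, Cn.refl _⟩, hyp⟩ ⟨z, hz, q, ⟨hq, hcon⟩, hzq⟩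
  exact hs' (hr'.trans (hL.conn hr hs (a8_of_cell hb hwr hws)))

/-- center of a cell -/
def ctr (b : ℤ → ℝ) (q : ℤ × ℤ) : Plane :=
  ![(b q.1 + b (q.1 + 1)) / 2, (b q.2 + b (q.2 + 1)) / 2]

theorem ctr_mem {b : ℤ → ℝ} (hb : Brk b) (q : ℤ × ℤ) : ctr b q ∈ ocell b q := by
  have h1 := hb.mono (show q.1 < q.1 + 1 by omega)
  have h2 := hb.mono (show q.2 < q.2 + 1 by omega)
  refine ⟨⟨?_, ?_⟩, ?_, ?_⟩ <;> simp [ctr] <;> linarith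

theorem ocell_subset (b : ℤ → ℝ) (q : ℤ × ℤ) : ocell b q ⊆ cell b q := by
  rintro z ⟨⟨h1, h2⟩, h3, h4⟩
  exact ⟨⟨h1.le, h2.le⟩, h3.le, h4.le⟩

theorem closure_ocell {b : ℤ → ℝ} (hb : Brk b) (q : ℤ × ℤ) :
    cell b q ⊆ closure (ocell b q) := by
  have e : ocell b q = Set.pi Set.univ
      (![Set.Ioo (b q.1) (b (q.1 + 1)), Set.Ioo (b q.2) (b (q.2 + 1))] : Fin 2 → Set ℝ) := by
    ext z
    simp [ocell, Set.mem_pi, Fin.forall_fin_two]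
  rw [e, closure_pi_set]
  rintro z ⟨h1, h2⟩
  rw [Set.mem_pi, Fin.forall_fin_two]
  have n1 := (hb.mono (show q.1 < q.1 + 1 by omega)).ne
  have n2 := (hb.mono (show q.2 < q.2 + 1 by omega)).ne
  refine ⟨fun _ => ?_, fun _ => ?_⟩
  · simp only [Matrix.cons_val_zero]
    rw [closure_Ioo n1]; exact h1
  · change z 1 ∈ closure (Set.Ioo (b q.2) (b (q.2 + 1)))
    rw [closure_Ioo n2]; exact h2

/-- `R` is a region with pixel set `L` -/
structure Reg (b : ℤ → ℝ) (L : Set (ℤ × ℤ)) (R : Set Plane) : Prop where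
  inn : ∀ z, (∀ q, z ∈ cell b q → q ∈ L) → z ∈ R
  out : R ⊆ cl b L

theorem eq_of_mem_ocell {b : ℤ → ℝ} (hb : Brk b) {p q : ℤ × ℤ} {z : Plane} (h : z ∈ ocell b p)
    (hq : z ∈ cell b q) : q = p := by
  obtain ⟨⟨p1, p2⟩, p3, p4⟩ := h
  obtain ⟨⟨q1, q2⟩, q3, q4⟩ := hq
  have a1 := hb.mono.lt_iff_lt.1 (p1.trans_le q2)
  have a2 := hb.mono.lt_iff_lt.1 (q1.trans_lt p2)
  have a3 := hb.mono.lt_iff_lt.1 (p3.trans_le q4)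
  have a4 := hb.mono.lt_iff_lt.1 (q3.trans_lt p4)
  exact Prod.ext (by omega) (by omega)

theorem Reg.ocell_sub {b : ℤ → ℝ} (hb : Brk b) {L : Set (ℤ × ℤ)} {R : Set Plane} (hR : Reg b L R)
    {p : ℤ × ℤ} (hp : p ∈ L) : ocell b p ⊆ R := by
  intro z hz
  refine hR.inn z fun q hq => ?_
  rw [eq_of_mem_ocell hb hz hq]; exact hp

theorem Reg.ctr_mem {b : ℤ → ℝ} (hb : Brk b) {L : Set (ℤ × ℤ)} {R : Set Plane} (hR : Reg b L R)
    {p : ℤ × ℤ} (hp : p ∈ L) : ctr b p ∈ R := hR.ocell_sub hb hp (ZL.ctr_mem hb p)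

theorem Reg.ocell_sub_comp {b : ℤ → ℝ} (hb : Brk b) {L : Set (ℤ × ℤ)} {R : Set Plane}
    (hR : Reg b L R) {p : ℤ × ℤ} (hp : p ∈ L) :
    ocell b p ⊆ connectedComponentIn R (ctr b p) :=
  (convex_obox _ _ _ _).isPreconnected.subset_connectedComponentIn (ZL.ctr_mem hb p)
    (hR.ocell_sub hb hp)

theorem Reg.comp_eq_aux {b : ℤ → ℝ} (hb : Brk b) {L : Set (ℤ × ℤ)} {R : Set Plane}
    (hR : Reg b L R) {p q : ℤ × ℤ} (hp : p ∈ L) (hq : q ∈ L)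
    (h : (p.1 = q.1 ∧ q.2 = p.2 + 1) ∨ (p.2 = q.2 ∧ q.1 = p.1 + 1)) :
    connectedComponentIn R (ctr b p) = connectedComponentIn R (ctr b q) := by
  have hcp := ZL.ctr_mem hb p
  have hcq := ZL.ctr_mem hb q
  set O : Set Plane := {z : Plane | (b p.1 < z 0 ∧ z 0 < b (q.1 + 1)) ∧
    (b p.2 < z 1 ∧ z 1 < b (q.2 + 1))} with hO
  have m1 : b p.1 ≤ b q.1 := hb.mono.monotone (by omega)
  have m2 : b p.2 ≤ b q.2 := hb.mono.monotone (by omega)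
  have m3 : b (p.1 + 1) ≤ b (q.1 + 1) := hb.mono.monotone (by omega)
  have m4 : b (p.2 + 1) ≤ b (q.2 + 1) := hb.mono.monotone (by omega)
  have hOR : O ⊆ R := by
    rintro z ⟨⟨z1, z2⟩, z3, z4⟩
    refine hR.inn z ?_
    rintro r ⟨⟨r1, r2⟩, r3, r4⟩
    have a1 := hb.mono.lt_iff_lt.1 (z1.trans_le r2)
    have a2 := hb.mono.lt_iff_lt.1 (r1.trans_lt z2)
    have a3 := hb.mono.lt_iff_lt.1 (z3.trans_le r4)
    have a4 := hb.mono.lt_iff_lt.1 (r3.trans_lt z4)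
    have : r = p ∨ r = q := by
      rcases (by omega : (r.1 = p.1 ∧ r.2 = p.2) ∨ (r.1 = q.1 ∧ r.2 = q.2)) with h' | h'
      · exact Or.inl (Prod.ext h'.1 h'.2)
      · exact Or.inr (Prod.ext h'.1 h'.2)
    rcases this with rfl | rfl <;> assumption
  have hpO : ctr b p ∈ O := by
    obtain ⟨⟨h1, h2⟩, h3, h4⟩ := hcp
    exact ⟨⟨h1, h2.trans_le m3⟩, h3, h4.trans_le m4⟩
  have hqO : ctr b q ∈ O := by
    obtain ⟨⟨h1, h2⟩, h3, h4⟩ := hcq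
    exact ⟨⟨m1.trans_lt h1, h2⟩, m2.trans_lt h3, h4⟩
  exact connectedComponentIn_eq
    ((convex_obox _ _ _ _).isPreconnected.subset_connectedComponentIn hpO hOR hqO)

theorem Reg.comp_eq {b : ℤ → ℝ} (hb : Brk b) {L : Set (ℤ × ℤ)} {R : Set Plane}
    (hR : Reg b L R) {p q : ℤ × ℤ} (h : Cn A4 L p q) :
    connectedComponentIn R (ctr b p) = connectedComponentIn R (ctr b q) := by
  induction h with
  | refl => rfl
  | tail _ hst ih =>
    obtain ⟨hs, ht, h⟩ := hst
    rw [ih]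
    rcases h with ⟨h1, h2 | h2⟩ | ⟨h1, h2 | h2⟩
    · exact hR.comp_eq_aux hb hs ht (Or.inl ⟨h1, h2⟩)
    · exact (hR.comp_eq_aux hb ht hs (Or.inl ⟨h1.symm, h2⟩)).symm
    · exact hR.comp_eq_aux hb hs ht (Or.inr ⟨h1, h2⟩)
    · exact (hR.comp_eq_aux hb ht hs (Or.inr ⟨h1.symm, h2⟩)).symm

theorem cell_inter_infinite {b : ℤ → ℝ} (hb : Brk b) {p q : ℤ × ℤ} (h : A4 p q) :
    (cell b p ∩ cell b q).Infinite := by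
  have aux : ∀ {p q : ℤ × ℤ}, ((p.1 = q.1 ∧ q.2 = p.2 + 1) ∨ (p.2 = q.2 ∧ q.1 = p.1 + 1)) →
      (cell b p ∩ cell b q).Infinite := by
    intro p q h
    have l1 := hb.mono (show p.1 < p.1 + 1 by omega)
    have l2 := hb.mono (show p.2 < p.2 + 1 by omega)
    rcases h with ⟨h1, h2⟩ | ⟨h1, h2⟩
    · have l3 := hb.mono (show q.2 < q.2 + 1 by omega)
      refine Set.Infinite.mono ?_ ((Set.Icc_infinite l1).image
        (f := fun x : ℝ => (![x, b (p.2 + 1)] : Plane)) ?_)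
      · rintro _ ⟨x, ⟨x1, x2⟩, rfl⟩
        constructor
        · refine ⟨⟨?_, ?_⟩, ?_, ?_⟩ <;> simp <;> linarith
        · unfold cell
          rw [← h1, ← h2]
          refine ⟨⟨?_, ?_⟩, ?_, ?_⟩ <;> simp <;> linarith
      · intro x _ y _ hxy
        exact congrFun hxy 0
    · have l3 := hb.mono (show q.1 < q.1 + 1 by omega)
      refine Set.Infinite.mono ?_ ((Set.Icc_infinite l2).image
        (f := fun x : ℝ => (![b (p.1 + 1), x] : Plane)) ?_)
      · rintro _ ⟨x, ⟨x1, x2⟩, rfl⟩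
        constructor
        · refine ⟨⟨?_, ?_⟩, ?_, ?_⟩ <;> simp <;> linarith
        · unfold cell
          rw [← h1, ← h2]
          refine ⟨⟨?_, ?_⟩, ?_, ?_⟩ <;> simp <;> linarith
      · intro x _ y _ hxy
        exact congrFun hxy 1
  rcases h with ⟨h1, h2 | h2⟩ | ⟨h1, h2 | h2⟩
  · exact aux (Or.inl ⟨h1, h2⟩)
  · rw [inter_comm]; exact aux (Or.inl ⟨h1.symm, h2⟩)
  · exact aux (Or.inr ⟨h1, h2⟩)
  · rw [inter_comm]; exact aux (Or.inr ⟨h1.symm, h2⟩)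

theorem sharesEdge_of_a4 {b : ℤ → ℝ} (hb : Brk b) {L L' : Set (ℤ × ℤ)} {R R' : Set Plane}
    (hR : Reg b L R) (hR' : Reg b L' R') {p q : ℤ × ℤ} (hp : p ∈ L) (hq : q ∈ L') (h : A4 p q) :
    SharesEdge (connectedComponentIn R (ctr b p)) (connectedComponentIn R' (ctr b q)) :=
  (cell_inter_infinite hb h).mono (inter_subset_inter
    ((closure_ocell hb p).trans (closure_mono (hR.ocell_sub_comp hb hp)))
    ((closure_ocell hb q).trans (closure_mono (hR'.ocell_sub_comp hb hq))))

theorem conn_of_sharesEdge {b : ℤ → ℝ} (hb : Brk b) {D : Set (ℤ × ℤ)} (hD : NoCheck D)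
    {C T : Set Plane} (hC : IsPreconnected C) (hT : IsPreconnected T) (hCD : C ⊆ cl b D)
    (hTD : T ⊆ cl b D) (hs : SharesEdge T C) {p q : ℤ × ℤ} (hp : p ∈ D) (hq : q ∈ D)
    {y z : Plane} (hy : y ∈ C) (hyp : y ∈ cell b p) (hz : z ∈ T) (hzq : z ∈ cell b q) :
    Cn A4 D p q := by
  obtain ⟨w, hwT, hwC⟩ := hs.nonempty
  refine conn_of_preconnected hb hD (hC.closure.union w hwC hwT hT.closure) ?_ hp hq
    (Or.inl (subset_closure hy)) hyp (Or.inr (subset_closure hz)) hzq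
  exact union_subset (closure_minimal hCD (isClosed_cl hb D))
    (closure_minimal hTD (isClosed_cl hb D))

theorem path_reroute {A0 F L : Set (ℤ × ℤ)} (hL : L ⊆ A0)
    (hadj : ∀ x ∈ A0, ∀ y ∈ F, A4 x y → x ∈ L)
    (hU : ∀ c₁ ∈ F, ∀ c₂ ∈ F, Cn A4 F c₁ c₂ → ∀ t₁ ∈ L, ∀ t₂ ∈ L, A4 c₁ t₁ → A4 c₂ t₂ →
      Cn A4 L t₁ t₂) {b b' : ℤ × ℤ} (hbF : b ∉ F) (hb' : b' ∈ A0)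
    (h : Cn A4 (A0 ∪ F) b b') : Cn A4 A0 b b' := by
  have key : (b' ∈ A0 → Cn A4 A0 b b') ∧ (b' ∈ F → ∃ c ∈ F, Cn A4 F c b' ∧ ∃ t ∈ L, A4 c t ∧
      Cn A4 A0 b t) := by
    clear hb'
    induction h with
    | refl => exact ⟨fun _ => Cn.refl _, fun h => (hbF h).elim⟩
    | tail _ hxy ih =>
      obtain ⟨hx, hy, hxy⟩ := hxy
      constructor
      · intro hyA
        rcases hx with hx | hx
        · exact (ih.1 hx).trans (Cn.single hx hyA hxy)
        · obtain ⟨c, hc, hcx, t, ht, hct, hbt⟩ := ih.2 hx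
          have hyL := hadj _ hyA _ hx hxy.symm
          exact hbt.trans ((hU c hc _ hx hcx t ht _ hyL hct hxy).mono (fun _ _ h => h) hL)
      · intro hyF
        rcases hx with hx | hx
        · exact ⟨_, hyF, Cn.refl _, _, hadj _ hx _ hyF hxy, hxy.symm, ih.1 hx⟩
        · obtain ⟨c, hc, hcx, t, ht, hct, hbt⟩ := ih.2 hx
          exact ⟨c, hc, hcx.trans (Cn.single hx hyF hxy), t, ht, hct, hbt⟩
  have hfin := key.1 hb'
  exact hfin

/-- (Genericity) one-step genericity of two pixel sets: across each grid line one of the sets is constant and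
the other one is monotone -/
def LineGen (A B A' B' : ℤ → Prop) : Prop :=
  ((∀ n, B n ↔ B' n) ∧ ((∀ n, A n → A' n) ∨ (∀ n, A' n → A n))) ∨
  ((∀ n, A n ↔ A' n) ∧ ((∀ n, B n → B' n) ∨ (∀ n, B' n → B n)))

structure Generic (A B : Set (ℤ × ℤ)) : Prop where
  hor : ∀ m, LineGen (fun n => (m, n) ∈ A) (fun n => (m, n) ∈ B) (fun n => (m + 1, n) ∈ A)
    (fun n => (m + 1, n) ∈ B)
  ver : ∀ m, LineGen (fun n => (n, m) ∈ A) (fun n => (n, m) ∈ B) (fun n => (n, m + 1) ∈ A)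
    (fun n => (n, m + 1) ∈ B)

theorem Generic.symm {A B : Set (ℤ × ℤ)} (h : Generic A B) : Generic B A :=
  ⟨fun m => (h.hor m).symm, fun m => (h.ver m).symm⟩

theorem noCheck_of_nested {L : Set (ℤ × ℤ)} (h : ∀ m : ℤ, (∀ n, (m, n) ∈ L → (m + 1, n) ∈ L) ∨
    (∀ n, (m + 1, n) ∈ L → (m, n) ∈ L)) : NoCheck L := by
  intro m n
  rcases h m with h | h
  · exact ⟨fun h1 _ => Or.inl (h _ h1), fun _ h2 => Or.inr (h _ h2)⟩
  · exact ⟨fun _ h2 => Or.inr (h _ h2), fun h1 _ => Or.inl (h _ h1)⟩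

theorem Generic.noCheck_left {A B : Set (ℤ × ℤ)} (h : Generic A B) : NoCheck A := by
  refine noCheck_of_nested fun m => ?_
  rcases h.hor m with ⟨h1, h2⟩ | ⟨h1, h2⟩
  · exact h2
  · exact Or.inl fun n => (h1 n).1

theorem Generic.noCheck_inter {A B : Set (ℤ × ℤ)} (h : Generic A B) : NoCheck (A ∩ B) := by
  refine noCheck_of_nested fun m => ?_
  rcases h.hor m with ⟨h1, h2 | h2⟩ | ⟨h1, h2 | h2⟩
  · exact Or.inl fun n hn => ⟨h2 n hn.1, (h1 n).1 hn.2⟩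
  · exact Or.inr fun n hn => ⟨h2 n hn.1, (h1 n).2 hn.2⟩
  · exact Or.inl fun n hn => ⟨(h1 n).1 hn.1, h2 n hn.2⟩
  · exact Or.inr fun n hn => ⟨(h1 n).2 hn.1, h2 n hn.2⟩

theorem Generic.noCheck_compl_inter {A B : Set (ℤ × ℤ)} (h : Generic A B) :
    NoCheck (A ∩ B)ᶜ := by
  refine noCheck_of_nested fun m => ?_
  rcases h.hor m with ⟨h1, h2 | h2⟩ | ⟨h1, h2 | h2⟩
  · exact Or.inr fun n hn hn' => hn ⟨h2 n hn'.1, (h1 n).1 hn'.2⟩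
  · exact Or.inl fun n hn hn' => hn ⟨h2 n hn'.1, (h1 n).2 hn'.2⟩
  · exact Or.inr fun n hn hn' => hn ⟨(h1 n).1 hn'.1, h2 n hn'.2⟩
  · exact Or.inl fun n hn hn' => hn ⟨(h1 n).2 hn'.1, h2 n hn'.2⟩

theorem Generic.noCheck_tn {A B : Set (ℤ × ℤ)} (h : Generic A B) : NoCheck (Aᶜ ∩ Bᶜ) := by
  refine noCheck_of_nested fun m => ?_
  rcases h.hor m with ⟨h1, h2 | h2⟩ | ⟨h1, h2 | h2⟩
  · exact Or.inr fun n hn => ⟨fun h => hn.1 (h2 n h), fun h => hn.2 ((h1 n).1 h)⟩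
  · exact Or.inl fun n hn => ⟨fun h => hn.1 (h2 n h), fun h => hn.2 ((h1 n).2 h)⟩
  · exact Or.inr fun n hn => ⟨fun h => hn.1 ((h1 n).1 h), fun h => hn.2 (h2 n h)⟩
  · exact Or.inl fun n hn => ⟨fun h => hn.1 ((h1 n).2 h), fun h => hn.2 (h2 n h)⟩

theorem LineGen.const {A B A' B' : ℤ → Prop} (h : LineGen A B A' B') (n : ℤ) :
    (A n ↔ A' n) ∨ (B n ↔ B' n) := by
  rcases h with h | h
  · exact Or.inr (h.1 n)
  · exact Or.inl (h.1 n)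

/-- across an edge, one of the sets is constant -/
theorem Generic.const {A B : Set (ℤ × ℤ)} (h : Generic A B) {p q : ℤ × ℤ} (hpq : A4 p q) :
    (p ∈ A ↔ q ∈ A) ∨ (p ∈ B ↔ q ∈ B) := by
  obtain ⟨m, n⟩ := p
  obtain ⟨m', n'⟩ := q
  rcases hpq with ⟨h1, h2 | h2⟩ | ⟨h1, h2 | h2⟩ <;> simp only at h1 h2 <;> subst h1 <;> subst h2
  · exact (h.ver n).const m
  · exact ((h.ver n').const m).imp Iff.symm Iff.symm
  · exact (h.hor m).const n
  · exact ((h.hor m').const n).imp Iff.symm Iff.symm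

theorem Generic.meet {A B : Set (ℤ × ℤ)} (h : Generic A B) {b : ℤ → ℝ} (hb : Brk b) {z : Plane}
    (hA : z ∈ cl b A) (hB : z ∈ cl b B) : z ∈ cl b (A ∩ B) := by
  obtain ⟨⟨m, n⟩, hpA, hpz⟩ := hA
  obtain ⟨⟨m', n'⟩, hqB, hqz⟩ := hB
  obtain ⟨h1, h2, h3, h4⟩ := a8_of_cell hb hpz hqz
  simp only at h1 h2 h3 h4
  have c1 : (m', n) ∈ A ∩ B ∨ (m, n') ∈ A ∩ B ∨ (m, n) ∈ A ∩ B ∨ (m', n') ∈ A ∩ B := by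
    have hor : (∀ k, (m, k) ∈ A ↔ (m', k) ∈ A) ∨ (∀ k, (m, k) ∈ B ↔ (m', k) ∈ B) := by
      rcases (by omega : m = m' ∨ m' = m + 1 ∨ m = m' + 1) with rfl | rfl | rfl
      · exact Or.inl fun _ => Iff.rfl
      · exact (h.hor m).symm.imp And.left And.left
      · exact (h.hor m').symm.imp (fun h k => (h.1 k).symm) (fun h k => (h.1 k).symm)
    have ver : (∀ k, (k, n) ∈ A ↔ (k, n') ∈ A) ∨ (∀ k, (k, n) ∈ B ↔ (k, n') ∈ B) := by
      rcases (by omega : n = n' ∨ n' = n + 1 ∨ n = n' + 1) with rfl | rfl | rfl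
      · exact Or.inl fun _ => Iff.rfl
      · exact (h.ver n).symm.imp And.left And.left
      · exact (h.ver n').symm.imp (fun h k => (h.1 k).symm) (fun h k => (h.1 k).symm)
    rcases hor with e | e <;> rcases ver with e' | e'
    · exact Or.inr (Or.inr (Or.inr ⟨(e' _).1 ((e _).1 hpA), hqB⟩))
    · exact Or.inl ⟨(e _).1 hpA, (e' _).2 hqB⟩
    · exact Or.inr (Or.inl ⟨(e' _).1 hpA, (e _).2 hqB⟩)
    · exact Or.inr (Or.inr (Or.inl ⟨hpA, (e _).2 ((e' _).2 hqB)⟩))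
  rcases c1 with h | h | h | h
  · exact ⟨_, h, hqz.1, hpz.2⟩
  · exact ⟨_, h, hpz.1, hqz.2⟩
  · exact ⟨_, h, hpz⟩
  · exact ⟨_, h, hqz⟩

theorem Brk.exists_cell {b : ℤ → ℝ} (hb : Brk b) (z : Plane) : ∃ q, z ∈ cell b q := by
  obtain ⟨m, h1, h2⟩ := hb.cov (z 0)
  obtain ⟨n, h3, h4⟩ := hb.cov (z 1)
  exact ⟨(m, n), ⟨h1, h2.le⟩, h3, h4.le⟩

/-- regularity of all components implies the combinatorial hypothesis -/
theorem good_of_regular {b : ℤ → ℝ} (hb : Brk b) {A B : Set (ℤ × ℤ)} (hg : Generic A B)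
    (hreg : ∀ C, IsCompOf C (cl b A ∩ (cl b B)ᶜ) →
      (∃! T : Set Plane, IsCompOf T (cl b A ∩ cl b B) ∧ SharesEdge T C) ∧
      (∃! T : Set Plane, IsCompOf T ((cl b A)ᶜ ∩ (cl b B)ᶜ) ∧ SharesEdge T C)) :
    Good (A ∩ B) A := by
  have mem_cl : ∀ {L : Set (ℤ × ℤ)} {z : Plane}, (∀ q, z ∈ cell b q → q ∈ L) → z ∈ cl b L := by
    intro L z h
    obtain ⟨q, hq⟩ := hb.exists_cell z
    exact ⟨q, h q hq, hq⟩
  have rTP : Reg b (A ∩ B) (cl b A ∩ cl b B) :=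
    ⟨fun z hz => ⟨mem_cl fun q hq => (hz q hq).1, mem_cl fun q hq => (hz q hq).2⟩,
      fun z hz => hg.meet hb hz.1 hz.2⟩
  have rTN : Reg b (Aᶜ ∩ Bᶜ) ((cl b A)ᶜ ∩ (cl b B)ᶜ) :=
    ⟨fun z hz => ⟨fun ⟨q, hq, hzq⟩ => (hz q hzq).1 hq, fun ⟨q, hq, hzq⟩ => (hz q hzq).2 hq⟩,
      fun z hz => mem_cl fun q hq => ⟨fun h => hz.1 ⟨q, h, hq⟩, fun h => hz.2 ⟨q, h, hq⟩⟩⟩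
  have rFP : Reg b (A ∩ Bᶜ) (cl b A ∩ (cl b B)ᶜ) :=
    ⟨fun z hz => ⟨mem_cl fun q hq => (hz q hq).1, fun ⟨q, hq, hzq⟩ => (hz q hzq).2 hq⟩,
      fun z ⟨⟨q, hq, hzq⟩, hz⟩ => ⟨q, ⟨hq, fun h => hz ⟨q, h, hzq⟩⟩, hzq⟩⟩
  have cl_mono : ∀ {L L' : Set (ℤ × ℤ)}, L ⊆ L' → cl b L ⊆ cl b L' :=
    fun h z ⟨q, hq, hz⟩ => ⟨q, h hq, hz⟩
  -- existence of a neighbouring component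
  have hex : ∀ (L D : Set (ℤ × ℤ)) (R : Set Plane), Reg b L R → NoCheck D → L ⊆ D →
      A ∩ Bᶜ ⊆ D →
      (∀ C, IsCompOf C (cl b A ∩ (cl b B)ᶜ) → ∃ T : Set Plane, IsCompOf T R ∧ SharesEdge T C) →
      ∀ x ∈ A ∩ Bᶜ, ∃ q ∈ L, Cn A4 D x q := by
    intro L D R hR hD hLD hFD hT x hx
    obtain ⟨T, ⟨w, hw, rfl⟩, hs⟩ := hT _ ⟨_, rFP.ctr_mem hb hx, rfl⟩
    obtain ⟨q, hq, hwq⟩ := hR.out hw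
    refine ⟨q, hq, conn_of_sharesEdge hb hD isPreconnected_connectedComponentIn
      isPreconnected_connectedComponentIn ?_ ?_ hs (hFD hx) (hLD hq)
      (mem_connectedComponentIn (rFP.ctr_mem hb hx)) (ocell_subset b x (ctr_mem hb x))
      (mem_connectedComponentIn hw) hwq⟩
    · exact (connectedComponentIn_subset _ _).trans (rFP.out.trans (cl_mono hFD))
    · exact (connectedComponentIn_subset _ _).trans (hR.out.trans (cl_mono hLD))
  -- uniqueness
  have hun : ∀ (L : Set (ℤ × ℤ)) (R : Set Plane), Reg b L R → NoCheck L →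
      (∀ C, IsCompOf C (cl b A ∩ (cl b B)ᶜ) → ∃! T : Set Plane, IsCompOf T R ∧ SharesEdge T C) →
      ∀ c₁ ∈ A ∩ Bᶜ, ∀ c₂ ∈ A ∩ Bᶜ, Cn A4 (A ∩ Bᶜ) c₁ c₂ → ∀ t₁ ∈ L, ∀ t₂ ∈ L, A4 c₁ t₁ →
      A4 c₂ t₂ → Cn A4 L t₁ t₂ := by
    intro L R hR hL hT c₁ hc₁ c₂ hc₂ hc t₁ ht₁ t₂ ht₂ h₁ h₂
    have e := rFP.comp_eq hb hc
    have s1 := sharesEdge_of_a4 hb hR rFP ht₁ hc₁ h₁.symm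
    have s2 := sharesEdge_of_a4 hb hR rFP ht₂ hc₂ h₂.symm
    rw [← e] at s2
    have e2 := (hT _ ⟨_, rFP.ctr_mem hb hc₁, rfl⟩).unique
      ⟨⟨_, hR.ctr_mem hb ht₁, rfl⟩, s1⟩ ⟨⟨_, hR.ctr_mem hb ht₂, rfl⟩, s2⟩
    refine conn_of_preconnected hb hL (S := connectedComponentIn R (ctr b t₁))
      isPreconnected_connectedComponentIn ((connectedComponentIn_subset _ _).trans hR.out) ht₁ ht₂
      (mem_connectedComponentIn (hR.ctr_mem hb ht₁)) (ocell_subset b _ (ctr_mem hb _))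
      (z := ctr b t₂) ?_ (ocell_subset b _ (ctr_mem hb _))
    rw [e2]
    exact mem_connectedComponentIn (hR.ctr_mem hb ht₂)
  have eA : (A ∩ B) ∪ (A ∩ Bᶜ) = A := inter_union_compl A B
  have eQ : Aᶜ ∪ (A ∩ Bᶜ) = (A ∩ B)ᶜ := by
    ext x
    simp only [mem_union, mem_compl_iff, mem_inter_iff]
    tauto
  refine ⟨inter_subset_left, ?_, ?_, ?_, ?_⟩
  · intro x hx
    by_cases hxB : x ∈ B
    · exact ⟨x, ⟨hx, hxB⟩, Cn.refl _⟩
    · obtain ⟨q, hq, hc⟩ := hex (A ∩ B) A _ rTP hg.noCheck_left inter_subset_left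
        inter_subset_left (fun C hC => (hreg C hC).1.exists) x ⟨hx, hxB⟩
      exact ⟨q, hq, hc.mono (fun _ _ h => h.a8) subset_rfl⟩
  · intro q hq q' hq' hc
    have h4 : Cn A4 A q q' := by
      clear hq'
      induction hc with
      | refl => exact Cn.refl _
      | tail _ h ih => exact ih.trans (hg.noCheck_left.conn h.1 h.2.1 h.2.2)
    rw [← eA] at h4
    refine Cn.mono (fun _ _ h => h.a8) subset_rfl (path_reroute (L := A ∩ B) subset_rfl
      (fun x hx _ _ _ => hx) (hun _ _ rTP hg.noCheck_inter fun C hC => (hreg C hC).1)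
      (fun h => h.2 hq.2) hq' h4)
  · intro x hx x' hx' hc
    rw [← eQ] at hc
    refine path_reroute (L := Aᶜ ∩ Bᶜ) inter_subset_left ?_
      (hun _ _ rTN hg.noCheck_tn fun C hC => (hreg C hC).2) (fun h => hx h.1) hx' hc
    intro y hy y' hy' hyy
    refine ⟨hy, fun hyB => ?_⟩
    rcases hg.const hyy with h | h
    · exact hy (h.2 hy'.1)
    · exact hy'.2 (h.1 hyB)
  · intro x hx
    by_cases hxA : x ∈ A
    · obtain ⟨q, hq, hc⟩ := hex (Aᶜ ∩ Bᶜ) (A ∩ B)ᶜ _ rTN hg.noCheck_compl_inter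
        (fun y hy h => hy.1 h.1) (fun y hy h => hy.2 h.2)
        (fun C hC => (hreg C hC).2.exists) x ⟨hxA, fun h => hx ⟨hxA, h⟩⟩
      exact ⟨q, hq.1, hc⟩
    · exact ⟨x, hxA, Cn.refl _⟩

/-- the breakpoints -/
def brk (ε : ℝ) (m : ℤ) : ℝ :=
  ((m / 4 : ℤ) : ℝ) +
    (if m % 4 = 0 then -(2 * ε) else if m % 4 = 1 then -ε else if m % 4 = 2 then ε else 2 * ε)

theorem brk0 (ε : ℝ) (k m : ℤ) (h : m = 4 * k) : brk ε m = k - 2 * ε := by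
  have h1 : m / 4 = k := by omega
  have h2 : m % 4 = 0 := by omega
  unfold brk
  rw [h1, h2]; norm_num; ring

theorem brk1 (ε : ℝ) (k m : ℤ) (h : m = 4 * k + 1) : brk ε m = k - ε := by
  have h1 : m / 4 = k := by omega
  have h2 : m % 4 = 1 := by omega
  unfold brk
  rw [h1, h2]; norm_num; ring

theorem brk2 (ε : ℝ) (k m : ℤ) (h : m = 4 * k + 2) : brk ε m = k + ε := by
  have h1 : m / 4 = k := by omega
  have h2 : m % 4 = 2 := by omega
  unfold brk
  rw [h1, h2]; norm_num

theorem brk3 (ε : ℝ) (k m : ℤ) (h : m = 4 * k + 3) : brk ε m = k + 2 * ε := by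
  have h1 : m / 4 = k := by omega
  have h2 : m % 4 = 3 := by omega
  unfold brk
  rw [h1, h2]; norm_num

theorem brk_Brk {ε : ℝ} (h0 : 0 < ε) (h1 : ε < 1 / 4) : Brk (brk ε) := by
  constructor
  · refine strictMono_int_of_lt_succ fun m => ?_
    rcases (by omega : m = 4 * (m / 4) ∨ m = 4 * (m / 4) + 1 ∨ m = 4 * (m / 4) + 2 ∨
      m = 4 * (m / 4) + 3) with h | h | h | h
    · rw [brk0 ε _ m h, brk1 ε (m / 4) (m + 1) (by omega)]; linarith
    · rw [brk1 ε _ m h, brk2 ε (m / 4) (m + 1) (by omega)]; linarith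
    · rw [brk2 ε _ m h, brk3 ε (m / 4) (m + 1) (by omega)]; linarith
    · rw [brk3 ε _ m h, brk0 ε (m / 4 + 1) (m + 1) (by omega)]; push_cast; linarith
  · intro x
    have f1 := Int.floor_le (x + 2 * ε)
    have f2 := Int.lt_floor_add_one (x + 2 * ε)
    set k := ⌊x + 2 * ε⌋
    have e0 := brk0 ε k (4 * k) rfl
    have e1 := brk1 ε k (4 * k + 1) rfl
    have e2 := brk2 ε k (4 * k + 2) rfl
    have e3 := brk3 ε k (4 * k + 3) rfl
    have e4 := brk0 ε (k + 1) (4 * k + 4) (by ring)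
    push_cast at e4
    by_cases c1 : x < k - ε
    · exact ⟨4 * k, by linarith, by linarith⟩
    by_cases c2 : x < k + ε
    · refine ⟨4 * k + 1, by linarith, ?_⟩
      rw [show 4 * k + 1 + 1 = 4 * k + 2 by ring]; linarith
    by_cases c3 : x < k + 2 * ε
    · refine ⟨4 * k + 2, by linarith, ?_⟩
      rw [show 4 * k + 2 + 1 = 4 * k + 3 by ring]; linarith
    · refine ⟨4 * k + 3, by linarith, ?_⟩
      rw [show 4 * k + 3 + 1 = 4 * k + 4 by ring]; linarith

theorem Brk.between {b : ℤ → ℝ} (hb : Brk b) {x : ℝ} {l r : ℤ} (hlr : l ≤ r) (h1 : b l ≤ x)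
    (h2 : x ≤ b (r + 1)) : ∃ m : ℤ, l ≤ m ∧ m ≤ r ∧ b m ≤ x ∧ x ≤ b (m + 1) := by
  obtain ⟨m, m1, m2⟩ := hb.cov x
  by_cases h : m ≤ r
  · refine ⟨m, ?_, h, m1, m2.le⟩
    have := hb.mono.lt_iff_lt.1 (h1.trans_lt m2)
    omega
  · have := hb.mono.monotone (show r + 1 ≤ m by omega)
    exact ⟨r, hlr, le_rfl, (hb.mono.monotone (show r ≤ m by omega)).trans m1, h2⟩

theorem mem_thick {δ : ℝ} (hδ : 0 ≤ δ) (S : Set (ℕ × ℕ)) (y : Plane) :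
    y ∈ thick δ (fg S) ↔ ∃ p ∈ S, ((p.1 : ℝ) - 1 - δ ≤ y 0 ∧ y 0 ≤ p.1 + δ) ∧
      ((p.2 : ℝ) - 1 - δ ≤ y 1 ∧ y 1 ≤ p.2 + δ) := by
  constructor
  · rintro ⟨x, hx, hxy⟩
    obtain ⟨p, hp, ⟨⟨x1, x2⟩, x3, x4⟩⟩ : ∃ p ∈ S, x ∈ pixel p := by simpa [fg] using hx
    rw [pi_norm_le_iff_of_nonneg hδ] at hxy
    have c0 := abs_le.1 (hxy 0)
    have c1 := abs_le.1 (hxy 1)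
    simp only [Pi.sub_apply] at c0 c1
    exact ⟨p, hp, ⟨by linarith [c0.2], by linarith [c0.1]⟩, by linarith [c1.2], by linarith [c1.1]⟩
  · rintro ⟨p, hp, ⟨h1, h2⟩, h3, h4⟩
    have key : ∀ t l : ℝ, l - 1 - δ ≤ t → t ≤ l + δ →
        ∃ s : ℝ, (l - 1 ≤ s ∧ s ≤ l) ∧ |s - t| ≤ δ := by
      intro t l h1 h2
      rcases le_total t (l - 1) with h | h
      · exact ⟨l - 1, ⟨le_rfl, by linarith⟩, abs_le.2 ⟨by linarith, by linarith⟩⟩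
      rcases le_total t l with h' | h'
      · exact ⟨t, ⟨h, h'⟩, by simpa using hδ⟩
      · exact ⟨l, ⟨by linarith, le_rfl⟩, abs_le.2 ⟨by linarith, by linarith⟩⟩
    obtain ⟨s, hs, hst⟩ := key _ _ h1 h2
    obtain ⟨s', hs', hst'⟩ := key _ _ h3 h4
    refine ⟨![s, s'], ?_, ?_⟩
    · have : (![s, s'] : Plane) ∈ pixel p := ⟨hs, hs'⟩
      exact subset_biUnion_of_mem (u := pixel) hp this
    · rw [pi_norm_le_iff_of_nonneg hδ, Fin.forall_fin_two]
      exact ⟨hst, hst'⟩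

theorem mem_cl_fine {b : ℤ → ℝ} (hb : Brk b) {c d : ℤ} (hcd : 0 ≤ c + d) (S : Set (ℕ × ℕ))
    (z : Plane) : z ∈ cl b (fine c d S) ↔
      ∃ p ∈ S, (b (4 * (p.1 : ℤ) - c) ≤ z 0 ∧ z 0 ≤ b (4 * (p.1 : ℤ) + d + 1)) ∧
        (b (4 * (p.2 : ℤ) - c) ≤ z 1 ∧ z 1 ≤ b (4 * (p.2 : ℤ) + d + 1)) := by
  constructor
  · rintro ⟨q, ⟨p, hp, ⟨h1, h2⟩, h3, h4⟩, ⟨h5, h6⟩, h7, h8⟩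
    exact ⟨p, hp, ⟨(hb.mono.monotone h1).trans h5, h6.trans (hb.mono.monotone (by omega))⟩,
      (hb.mono.monotone h3).trans h7, h8.trans (hb.mono.monotone (by omega))⟩
  · rintro ⟨p, hp, ⟨h1, h2⟩, h3, h4⟩
    obtain ⟨m, m1, m2, m3⟩ := hb.between (by omega) h1 h2
    obtain ⟨n, n1, n2, n3⟩ := hb.between (by omega) h3 h4
    exact ⟨(m, n), ⟨p, hp, ⟨m1, m2⟩, n1, n2⟩, m3, n3⟩

theorem thick_eq_P {ε : ℝ} (h0 : 0 < ε) (h1 : ε < 1 / 4) (S : Set (ℕ × ℕ)) :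
    thick ε (fg S) = cl (brk ε) (fine 3 1 S) := by
  ext z
  rw [mem_thick h0.le, mem_cl_fine (brk_Brk h0 h1) (by norm_num)]
  have e1 : ∀ i : ℕ, brk ε (4 * (i : ℤ) - 3) = (i : ℝ) - 1 - ε := fun i => by
    rw [brk1 ε ((i : ℤ) - 1) _ (by ring)]; push_cast; ring
  have e2 : ∀ i : ℕ, brk ε (4 * (i : ℤ) + 1 + 1) = (i : ℝ) + ε := fun i => by
    rw [brk2 ε (i : ℤ) _ (by ring)]; push_cast; ring
  simp only [e1, e2]

theorem thick_eq_G {ε : ℝ} (h0 : 0 < ε) (h1 : ε < 1 / 4) (S : Set (ℕ × ℕ)) :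
    thick (2 * ε) (fg S) = cl (brk ε) (fine 4 2 S) := by
  ext z
  rw [mem_thick (by linarith), mem_cl_fine (brk_Brk h0 h1) (by norm_num)]
  have e1 : ∀ i : ℕ, brk ε (4 * (i : ℤ) - 4) = (i : ℝ) - 1 - 2 * ε := fun i => by
    rw [brk0 ε ((i : ℤ) - 1) _ (by ring)]; push_cast; ring
  have e2 : ∀ i : ℕ, brk ε (4 * (i : ℤ) + 2 + 1) = (i : ℝ) + 2 * ε := fun i => by
    rw [brk3 ε (i : ℤ) _ (by ring)]; push_cast; ring
  simp only [e1, e2]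

theorem fine_generic (P G : Set (ℕ × ℕ)) : Generic (fine 3 1 P) (fine 4 2 G) := by
  have up : ∀ {c d m m' n n' : ℤ} {S : Set (ℕ × ℕ)},
      (∀ i : ℤ, (4 * i - c ≤ m ∧ m ≤ 4 * i + d) → (4 * i - c ≤ m' ∧ m' ≤ 4 * i + d)) →
      (∀ i : ℤ, (4 * i - c ≤ n ∧ n ≤ 4 * i + d) → (4 * i - c ≤ n' ∧ n' ≤ 4 * i + d)) →
      (m, n) ∈ fine c d S → (m', n') ∈ fine c d S := by
    rintro c d m m' n n' S h h' ⟨p, hp, h1, h2⟩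
    exact ⟨p, hp, h _ h1, h' _ h2⟩
  constructor
  · intro m
    rcases (by omega : m % 4 = 0 ∨ m % 4 = 1 ∨ m % 4 = 2 ∨ m % 4 = 3) with h | h | h | h
    · exact Or.inl ⟨fun n => ⟨up (by intros; omega) (by intros; omega),
        up (by intros; omega) (by intros; omega)⟩,
        Or.inl fun n => up (by intros; omega) (by intros; omega)⟩
    · exact Or.inl ⟨fun n => ⟨up (by intros; omega) (by intros; omega),
        up (by intros; omega) (by intros; omega)⟩,
        Or.inr fun n => up (by intros; omega) (by intros; omega)⟩
    · exact Or.inr ⟨fun n => ⟨up (by intros; omega) (by intros; omega),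
        up (by intros; omega) (by intros; omega)⟩,
        Or.inr fun n => up (by intros; omega) (by intros; omega)⟩
    · exact Or.inr ⟨fun n => ⟨up (by intros; omega) (by intros; omega),
        up (by intros; omega) (by intros; omega)⟩,
        Or.inl fun n => up (by intros; omega) (by intros; omega)⟩
  · intro m
    rcases (by omega : m % 4 = 0 ∨ m % 4 = 1 ∨ m % 4 = 2 ∨ m % 4 = 3) with h | h | h | h
    · exact Or.inl ⟨fun n => ⟨up (by intros; omega) (by intros; omega),
        up (by intros; omega) (by intros; omega)⟩,
        Or.inl fun n => up (by intros; omega) (by intros; omega)⟩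
    · exact Or.inl ⟨fun n => ⟨up (by intros; omega) (by intros; omega),
        up (by intros; omega) (by intros; omega)⟩,
        Or.inr fun n => up (by intros; omega) (by intros; omega)⟩
    · exact Or.inr ⟨fun n => ⟨up (by intros; omega) (by intros; omega),
        up (by intros; omega) (by intros; omega)⟩,
        Or.inr fun n => up (by intros; omega) (by intros; omega)⟩
    · exact Or.inr ⟨fun n => ⟨up (by intros; omega) (by intros; omega),
        up (by intros; omega) (by intros; omega)⟩,
        Or.inl fun n => up (by intros; omega) (by intros; omega)⟩

theorem main
    (h w : ℕ) (P G : Set (ℕ × ℕ)) (hP : OnGrid P h w) (hG : OnGrid G h w)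
    (ε : ℝ) (hε0 : 0 < ε) (hε : ε < 1 / 4) (hzero : ZeroLoss P G ε) :
    Nonempty (ContinuousMap.HomotopyEquiv ↥(fg P) ↥(fg G)) := by
  have hb := brk_Brk hε0 hε
  have hgen := fine_generic P G
  obtain ⟨z1, z2⟩ := hzero
  simp only [RegularComp, FPset, FNset, TPset, TNset, thick_eq_P hε0 hε, thick_eq_G hε0 hε]
    at z1 z2
  have g1 := good_of_regular hb hgen z1
  have g2 : Good (fine 4 2 G ∩ fine 3 1 P) (fine 4 2 G) := by
    refine good_of_regular hb hgen.symm fun C hC => ?_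
    rw [inter_comm] at hC
    have := z2 C hC
    rw [inter_comm (cl (brk ε) (fine 4 2 G)), inter_comm (cl (brk ε) (fine 4 2 G))ᶜ]
    exact this
  rw [inter_comm] at g2
  obtain ⟨e1⟩ := fg_homotopyEquiv_fine hP (a := 3) (b := 1) (by norm_num) (by norm_num)
    (by norm_num) (by norm_num)
  obtain ⟨e2⟩ := fg_homotopyEquiv_fine hG (a := 4) (b := 2) (by norm_num) (by norm_num)
    (by norm_num) (by norm_num)
  obtain ⟨e3⟩ := good_homotopyEquiv _ g1 (fine_finite hP 3 1) le_rfl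
  obtain ⟨e4⟩ := good_homotopyEquiv _ g2 (fine_finite hG 4 2) le_rfl
  exact ⟨(e1.trans e3).trans (e2.trans e4).symm⟩

end ZL

/-- Under the zero-loss hypothesis, the unthickened foregrounds `F(P)` and
`F(G)` are homotopy equivalent. -/
theorem zero_loss_foregrounds_homotopyEquiv
    (h w : ℕ) (P G : Set (ℕ × ℕ)) (hP : OnGrid P h w) (hG : OnGrid G h w)
    (ε : ℝ) (hε0 : 0 < ε) (hε : ε < 1 / 4) (hzero : ZeroLoss P G ε) :
    Nonempty (ContinuousMap.HomotopyEquiv ↥(fg P) ↥(fg G)) := by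
  exact ZL.main h w P G hP hG ε hε0 hε hzero

end
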